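/- arXiv:1403.4555 — 2 statements merged into one kernel-verified Lean document; each statement's English description precedes it below -/
import Mathlib

section
/- Let T be a bounded linear operator on a complex separable Banach space X. Assume that T has a perfectly spanning set of unimodular eigenvectors and that the periodic eigenvectors of T are dense in the set of all unimodular eigenvectors of T. Then F̄_T(HC(T)) is a dense G_δ subset of F̄_T(X). -/
open MeasureTheory Filter Topology Set

/-- The periodic measure `ν_a = (1/N) ∑_{n<N} δ_{T^n a}` associated with a point `a`
and a period `N`. -/
noncomputable def periodicMeasure {X : Type*} [MeasurableSpace X] (T : X → X)
    (a : X) (N : ℕ) : Measure X :=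
  (N : ENNReal)⁻¹ • ∑ n ∈ Finset.range N, Measure.dirac (T^[n] a)

/-- `F_T(X)`: the convex hull of the set of periodic measures for `T`, as a subset of
the space of Borel probability measures on `X`. -/
def FT {X : Type*} [TopologicalSpace X] [MeasurableSpace X] (T : X → X) :
    Set (ProbabilityMeasure X) :=
  {μ | ∃ (k : ℕ) (c : Fin k → ENNReal) (a : Fin k → X) (N : Fin k → ℕ),
    (∑ i, c i) = 1 ∧ (∀ i, 1 ≤ N i ∧ T^[N i] (a i) = a i) ∧
    (↑μ : Measure X) = ∑ i, c i • periodicMeasure T (a i) (N i)}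


section
variable {X : Type*} [MetricSpace X] [CompleteSpace X]
    [TopologicalSpace.SeparableSpace X] [MeasurableSpace X] [BorelSpace X]

/-- For a Lévy–Prokhorov Cauchy sequence, some thickening of a compact set has almost full mass. -/
lemma LP_cauchy_thickening (u : ℕ → LevyProkhorov (ProbabilityMeasure X)) (hu : CauchySeq u)
    {δ : ℝ} (hδ : 0 < δ) :
    ∃ K : Set X, IsCompact K ∧ ∀ n, ((u n).toMeasure : Measure X) (Metric.thickening δ K)ᶜ
      ≤ ENNReal.ofReal (2 * δ) := by
  have : SecondCountableTopology X := UniformSpace.secondCountable_of_separable X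
  obtain ⟨N, hN⟩ := Metric.cauchySeq_iff'.1 hu δ hδ
  have h1 : ∀ i, ∃ K : Set X, IsCompact K ∧ ((u i).toMeasure : Measure X) Kᶜ ≤ ENNReal.ofReal δ := by
    intro i
    have := (isTightMeasureSet_iff_exists_isCompact_measure_compl_le).1
      (isTightMeasureSet_singleton (μ := ((u i).toMeasure : Measure X))) (ENNReal.ofReal δ)
      (by simpa using hδ)
    obtain ⟨K, hK, h⟩ := this
    exact ⟨K, hK, h _ rfl⟩
  choose K hK hKm using h1
  have hsub : ∀ i ≤ N, K i ⊆ ⋃ i ∈ Finset.range (N + 1), K i := fun i hi =>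
    Set.subset_biUnion_of_mem (u := K) (by simpa using Nat.lt_succ_of_le hi)
  refine ⟨⋃ i ∈ Finset.range (N + 1), K i,
    (Finset.range (N + 1)).isCompact_biUnion fun i _ => hK i, fun n => ?_⟩
  rcases le_or_gt n N with hn | hn
  · calc _ ≤ ((u n).toMeasure : Measure X) (K n)ᶜ := by
          refine measure_mono (Set.compl_subset_compl.2 ?_)
          exact (hsub n hn).trans (Metric.self_subset_thickening hδ _)
      _ ≤ ENNReal.ofReal δ := hKm n
      _ ≤ _ := ENNReal.ofReal_le_ofReal (by linarith)
  · have h2 := hN n hn.le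
    have h3 : levyProkhorovEDist ((u N).toMeasure : Measure X) ((u n).toMeasure : Measure X)
        < ENNReal.ofReal δ := by
      rw [dist_comm, ← edist_lt_ofReal] at h2
      exact h2
    have hm := (hK N).isClosed.measurableSet
    have h4 := left_measure_le_of_levyProkhorovEDist_lt h3 hm
    rw [ENNReal.toReal_ofReal hδ.le] at h4
    have hT : MeasurableSet (Metric.thickening δ (⋃ i ∈ Finset.range (N + 1), K i)) :=
      Metric.isOpen_thickening.measurableSet
    have h5 : ((u n).toMeasure : Measure X) (Metric.thickening δ (K N)) ≤
       ((u n).toMeasure : Measure X) (Metric.thickening δ (⋃ i ∈ Finset.range (N + 1), K i)) :=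
      measure_mono (Metric.thickening_subset_of_subset _ (hsub N le_rfl))
    have h6 := hKm N
    rw [prob_compl_eq_one_sub hm] at h6
    rw [prob_compl_eq_one_sub hT, two_mul, ENNReal.ofReal_add hδ.le hδ.le]
    rw [tsub_le_iff_right] at h6 ⊢
    calc (1 : ENNReal) ≤ _ := h6
      _ ≤ ENNReal.ofReal δ + (((u n).toMeasure : Measure X)
          (Metric.thickening δ (⋃ i ∈ Finset.range (N + 1), K i)) + ENNReal.ofReal δ) := by
        gcongr; exact h4.trans (by gcongr)
      _ = _ := by ring

lemma LP_cauchy_tight (u : ℕ → LevyProkhorov (ProbabilityMeasure X)) (hu : CauchySeq u) :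
    IsTightMeasureSet {((μ : ProbabilityMeasure X) : Measure X) |
      μ ∈ Set.range fun n => (u n).toMeasure} := by
  rw [isTightMeasureSet_iff_exists_isCompact_measure_compl_le]
  intro ε hε
  obtain ⟨e, he0, hes⟩ := ENNReal.exists_pos_sum_of_countable hε.ne' ℕ
  set d : ℕ → ℝ := fun j => min ((e j : ℝ) / 2) (1 / ((j : ℝ) + 1))
  have hd : ∀ j, 0 < d j := fun j => lt_min (by have := he0 j; positivity) (by positivity)
  choose K hK hKm using fun j => LP_cauchy_thickening u hu (hd j)
  refine ⟨⋂ j, Metric.cthickening (d j) (K j), ?_, ?_⟩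
  · refine TotallyBounded.isCompact_of_isClosed ?_
      (isClosed_iInter fun j => Metric.isClosed_cthickening)
    rw [Metric.totallyBounded_iff]
    intro r hr
    obtain ⟨j, hj⟩ := exists_nat_one_div_lt (half_pos hr)
    obtain ⟨t, ht, htK⟩ := Metric.totallyBounded_iff.1 (hK j).totallyBounded (r / 2) (half_pos hr)
    refine ⟨t, ht, fun x hx => ?_⟩
    have hx1 := Metric.cthickening_subset_thickening' (half_pos hr)
      (lt_of_le_of_lt (min_le_right _ _) hj) (K j) (Set.mem_iInter.1 hx j)
    obtain ⟨z, hz, hxz⟩ := Metric.mem_thickening_iff.1 hx1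
    obtain ⟨y, hy, hzy⟩ := Set.mem_iUnion₂.1 (htK hz)
    refine Set.mem_iUnion₂.2 ⟨y, hy, ?_⟩
    rw [Metric.mem_ball] at hzy ⊢
    linarith [dist_triangle x z y]
  · rintro _ ⟨_, ⟨n, rfl⟩, rfl⟩
    rw [Set.compl_iInter]
    calc _ ≤ ∑' j, ((u n).toMeasure : Measure X) (Metric.cthickening (d j) (K j))ᶜ :=
          measure_iUnion_le _
      _ ≤ ∑' j, (e j : ENNReal) := by
          refine ENNReal.tsum_le_tsum fun j => ?_
          calc _ ≤ ((u n).toMeasure : Measure X) (Metric.thickening (d j) (K j))ᶜ :=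
                measure_mono (Set.compl_subset_compl.2 (Metric.thickening_subset_cthickening _ _))
            _ ≤ ENNReal.ofReal (2 * d j) := hKm j n
            _ ≤ ENNReal.ofReal (e j) := by
                refine ENNReal.ofReal_le_ofReal ?_
                have := min_le_left ((e j : ℝ) / 2) (1 / ((j : ℝ) + 1))
                show 2 * min ((e j : ℝ) / 2) (1 / ((j : ℝ) + 1)) ≤ _
                linarith
            _ = e j := ENNReal.ofReal_coe_nnreal
      _ ≤ ε := hes.le

lemma LP_complete : CompleteSpace (LevyProkhorov (ProbabilityMeasure X)) := by
  refine Metric.complete_of_cauchySeq_tendsto fun u hu => ?_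
  have hc := isCompact_closure_of_isTightMeasureSet (LP_cauchy_tight u hu)
  have hc' : IsCompact (LevyProkhorov.probabilityMeasureHomeomorph (Ω := X) ''
    (closure (Set.range fun n => (u n).toMeasure))) :=
    hc.image LevyProkhorov.probabilityMeasureHomeomorph.continuous
  obtain ⟨a, _, φ, hφ, hlim⟩ := hc'.tendsto_subseq (x := u) fun n =>
    ⟨(u n).toMeasure, subset_closure ⟨n, rfl⟩, rfl⟩
  exact ⟨a, tendsto_nhds_of_cauchySeq_of_subseq hu hφ.tendsto_atTop hlim⟩

lemma baire_closed {S : Set (ProbabilityMeasure X)} (hS : IsClosed S) : BaireSpace S := by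
  have := LP_complete (X := X)
  have h : IsClosedEmbedding (fun s : S =>
      LevyProkhorov.probabilityMeasureHomeomorph (Ω := X) s.1) :=
    (LevyProkhorov.probabilityMeasureHomeomorph (Ω := X)).isClosedEmbedding.comp
      hS.isClosedEmbedding_subtypeVal
  have := h.IsCompletelyMetrizableSpace
  infer_instance
end

/-- `w` can be approximated by periodic points whose orbit is small in mean. -/
def GoodVec {X : Type*} [NormedAddCommGroup X] [NormedSpace ℂ X] (T : X →L[ℂ] X) (w : X) : Prop :=
  ∀ ε : ℝ, 0 < ε → ∃ (w' : X) (P : ℕ), 1 ≤ P ∧ (⇑T)^[P] w' = w' ∧ ‖w' - w‖ < ε ∧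
    ∑ n ∈ Finset.range P, ‖(⇑T)^[n] w'‖ ≤ ε * P

lemma sum_period_mul {X : Type*} (T : X → X) (g : X → ℝ) (w : X) (P Q : ℕ)
    (h : T^[P] w = w) :
    ∑ n ∈ Finset.range (P * Q), g (T^[n] w) = Q * ∑ n ∈ Finset.range P, g (T^[n] w) := by
  induction Q with
  | zero => simp
  | succ Q ih =>
    rw [Nat.mul_succ, Finset.sum_range_add, ih]
    have : ∀ n, T^[P * Q + n] w = T^[n] w := by
      intro n
      rw [Nat.add_comm, Function.iterate_add_apply]
      congr 1
      have : Function.IsPeriodicPt T P w := h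
      exact (this.mul_const Q)
    simp only [this]
    push_cast; ring

section
variable {X : Type*} [NormedAddCommGroup X] [NormedSpace ℂ X] (T : X →L[ℂ] X)

lemma GoodVec.zero : GoodVec T 0 := by
  intro ε hε
  exact ⟨0, 1, le_rfl, by simp, by simpa using hε, by simpa using hε.le⟩

lemma GoodVec.add {x y : X} (hx : GoodVec T x) (hy : GoodVec T y) : GoodVec T (x + y) := by
  intro ε hε
  obtain ⟨x', P, hP, hxP, hxe, hxs⟩ := hx (ε / 2) (half_pos hε)
  obtain ⟨y', Q, hQ, hyQ, hye, hys⟩ := hy (ε / 2) (half_pos hε)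
  have h1 : (⇑T)^[P * Q] x' = x' := (show Function.IsPeriodicPt T P x' from hxP).mul_const Q
  have h2 : (⇑T)^[P * Q] y' = y' := (show Function.IsPeriodicPt T Q y' from hyQ).const_mul P
  refine ⟨x' + y', P * Q, Nat.mul_pos hP hQ, ?_, ?_, ?_⟩
  · rw [iterate_map_add, h1, h2]
  · calc ‖x' + y' - (x + y)‖ = ‖(x' - x) + (y' - y)‖ := by congr 1; abel
      _ ≤ _ := norm_add_le _ _
      _ < ε := by linarith
  · calc ∑ n ∈ Finset.range (P * Q), ‖(⇑T)^[n] (x' + y')‖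
        ≤ ∑ n ∈ Finset.range (P * Q), (‖(⇑T)^[n] x'‖ + ‖(⇑T)^[n] y'‖) := by
          refine Finset.sum_le_sum fun n _ => ?_
          rw [iterate_map_add]; exact norm_add_le _ _
      _ = Q * ∑ n ∈ Finset.range P, ‖(⇑T)^[n] x'‖ + P * ∑ n ∈ Finset.range Q, ‖(⇑T)^[n] y'‖ := by
          rw [Finset.sum_add_distrib, sum_period_mul T (fun z => ‖z‖) x' P Q hxP, Nat.mul_comm P Q,
            sum_period_mul T (fun z => ‖z‖) y' Q P hyQ]
      _ ≤ Q * (ε / 2 * P) + P * (ε / 2 * Q) := by gcongr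
      _ = ε * ((P * Q : ℕ) : ℝ) := by push_cast; ring

lemma GoodVec.smul (c : ℂ) {x : X} (hx : GoodVec T x) : GoodVec T (c • x) := by
  intro ε hε
  have hc : 0 < ‖c‖ + 1 := by positivity
  obtain ⟨x', P, hP, hxP, hxe, hxs⟩ := hx (ε / (‖c‖ + 1)) (by positivity)
  have hit : ∀ n, (⇑T)^[n] (c • x') = c • (⇑T)^[n] x' := by
    intro n
    rw [← FunLike.coe_pow_eq_iterate, map_smul]
  have hle : ‖c‖ * (ε / (‖c‖ + 1)) ≤ ε := by
    rw [← mul_div_assoc, div_le_iff₀ hc]; nlinarith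
  refine ⟨c • x', P, hP, by rw [hit, hxP], ?_, ?_⟩
  · rw [← smul_sub, norm_smul]
    rcases eq_or_ne c 0 with rfl | h0
    · simpa using hε
    · exact (mul_lt_mul_of_pos_left hxe (norm_pos_iff.2 h0)).trans_le hle
  · simp only [hit, norm_smul, ← Finset.mul_sum]
    calc ‖c‖ * _ ≤ ‖c‖ * (ε / (‖c‖ + 1) * P) := by gcongr
      _ = (‖c‖ * (ε / (‖c‖ + 1))) * P := by ring
      _ ≤ ε * P := by gcongr

lemma GoodVec.isClosed : IsClosed {x : X | GoodVec T x} := by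
  refine isClosed_of_closure_subset fun x hx ε hε => ?_
  obtain ⟨y, hy, hxy⟩ := Metric.mem_closure_iff.1 hx (ε / 2) (half_pos hε)
  obtain ⟨x', P, hP, hxP, hxe, hxs⟩ := hy (ε / 2) (half_pos hε)
  refine ⟨x', P, hP, hxP, ?_, hxs.trans (by gcongr; linarith)⟩
  rw [dist_comm, dist_eq_norm] at hxy
  calc ‖x' - x‖ = ‖(x' - y) + (y - x)‖ := by congr 1; abel
    _ ≤ _ := norm_add_le _ _
    _ < ε := by linarith

lemma sum_sq_roots (l : ℕ → ℂ) (hinj : Function.Injective l) (K P : ℕ)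
    (hn : ∀ k, ‖l k‖ = 1) (hP : ∀ k < K, l k ^ P = 1) :
    ∑ n ∈ Finset.range P, ‖∑ k ∈ Finset.range K, l k ^ n‖ ^ 2 = (P : ℝ) * K := by
  have key : ∀ j < K, ∀ k < K, ∑ n ∈ Finset.range P, (l j * (starRingEnd ℂ) (l k)) ^ n
      = if j = k then (P : ℂ) else 0 := by
    intro j hj k hk
    have hk1 : l k * (starRingEnd ℂ) (l k) = 1 := by
      rw [Complex.mul_conj, Complex.normSq_eq_norm_sq, hn]; simp
    split_ifs with h
    · subst h; simp [hk1]
    · have hne : l j * (starRingEnd ℂ) (l k) - 1 ≠ 0 := by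
        intro h0
        apply h
        apply hinj
        calc l j = (l j * (starRingEnd ℂ) (l k) - 1) * l k + l k + l j * (1 - l k * (starRingEnd ℂ) (l k)) := by ring
          _ = l k := by rw [h0, hk1]; ring
      have := mul_geom_sum (l j * (starRingEnd ℂ) (l k)) P
      rw [mul_pow, ← map_pow, hP j hj, hP k hk] at this
      simpa [hne] using this
  have : ((∑ n ∈ Finset.range P, ‖∑ k ∈ Finset.range K, l k ^ n‖ ^ 2 : ℝ) : ℂ) = (P : ℂ) * K := by
    push_cast
    calc ∑ n ∈ Finset.range P, ((‖∑ k ∈ Finset.range K, l k ^ n‖ : ℝ) : ℂ) ^ 2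
        = ∑ n ∈ Finset.range P, ∑ j ∈ Finset.range K, ∑ k ∈ Finset.range K,
            (l j * (starRingEnd ℂ) (l k)) ^ n := by
          refine Finset.sum_congr rfl fun n _ => ?_
          rw [← Complex.mul_conj', map_sum, Finset.sum_mul_sum]
          simp [mul_pow]
      _ = ∑ j ∈ Finset.range K, ∑ k ∈ Finset.range K, ∑ n ∈ Finset.range P,
            (l j * (starRingEnd ℂ) (l k)) ^ n := by
          rw [Finset.sum_comm]
          refine Finset.sum_congr rfl fun j _ => ?_
          rw [Finset.sum_comm]
      _ = ∑ j ∈ Finset.range K, ∑ k ∈ Finset.range K, if j = k then (P : ℂ) else 0 := by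
          refine Finset.sum_congr rfl fun j hj => Finset.sum_congr rfl fun k hk => ?_
          exact key j (Finset.mem_range.1 hj) k (Finset.mem_range.1 hk)
      _ = ∑ j ∈ Finset.range K, (P : ℂ) := by
          refine Finset.sum_congr rfl fun j hj => ?_
          rw [Finset.sum_ite_eq, if_pos hj]
      _ = (P : ℂ) * K := by simp [mul_comm]
  exact_mod_cast this

lemma sum_roots_le (l : ℕ → ℂ) (hinj : Function.Injective l) (K P : ℕ)
    (hn : ∀ k, ‖l k‖ = 1) (hP : ∀ k < K, l k ^ P = 1) :
    ∑ n ∈ Finset.range P, ‖∑ k ∈ Finset.range K, l k ^ n‖ ≤ (P : ℝ) * √K := by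
  have h := sq_sum_le_card_mul_sum_sq (s := Finset.range P)
    (f := fun n => ‖∑ k ∈ Finset.range K, l k ^ n‖)
  rw [sum_sq_roots l hinj K P hn hP, Finset.card_range] at h
  refine abs_le_of_sq_le_sq' ?_ (by positivity) |>.2
  rw [mul_pow, Real.sq_sqrt (by positivity)]
  linarith

lemma GoodVec.of_eig {x : X} (hx : ∀ ε : ℝ, 0 < ε → ∀ F : Set ℂ, F.Finite →
    ∃ (y : X) (l : ℂ), ‖y - x‖ < ε ∧ l ∉ F ∧ (∃ n : ℕ, 1 ≤ n ∧ l ^ n = 1) ∧ T y = l • y) :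
    GoodVec T x := by
  classical
  intro ε hε
  obtain ⟨f, hf, hfr⟩ := exists_seq_of_forall_finset_exists
    (fun p : X × ℂ => ‖p.1 - x‖ < ε / 2 ∧ (∃ n : ℕ, 1 ≤ n ∧ p.2 ^ n = 1) ∧ T p.1 = p.2 • p.1)
    (fun p q => p.2 ≠ q.2) (by
      intro s _
      obtain ⟨y, l, h1, h2, h3, h4⟩ := hx (ε / 2) (half_pos hε) (s.image Prod.snd)
        (Finset.finite_toSet _)
      refine ⟨(y, l), ⟨h1, h3, h4⟩, fun p hp heq => h2 ?_⟩
      simp only [Finset.coe_image, Set.mem_image, Finset.mem_coe]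
      exact ⟨p, hp, heq⟩)
  set y := fun n => (f n).1
  set l := fun n => (f n).2
  have hye : ∀ n, ‖y n - x‖ < ε / 2 := fun n => (hf n).1
  have hT : ∀ n, T (y n) = l n • y n := fun n => (hf n).2.2
  choose p hp1 hpl using fun n => (hf n).2.1
  have hinj : Function.Injective l := by
    intro m n hmn
    rcases lt_trichotomy m n with h | h | h
    · exact absurd hmn (hfr m n h)
    · exact h
    · exact absurd hmn.symm (hfr n m h)
  have hn : ∀ k, ‖l k‖ = 1 := fun k =>
    Complex.norm_eq_one_of_pow_eq_one (hpl k) (by have := hp1 k; omega)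
  obtain ⟨K, hK⟩ := exists_nat_gt ((2 * ‖x‖ / ε) ^ 2)
  have hK0 : (0 : ℝ) < K := lt_of_le_of_lt (by positivity) hK
  have hsK : ‖x‖ ≤ ε / 2 * √K := by
    have : 2 * ‖x‖ / ε < √K := Real.lt_sqrt_of_sq_lt hK
    rw [div_lt_iff₀ hε] at this
    linarith
  set P := ∏ k ∈ Finset.range K, p k
  have hP1 : 1 ≤ P := Nat.succ_le_of_lt (Finset.prod_pos fun k _ => hp1 k)
  have hlP : ∀ k < K, l k ^ P = 1 := by
    intro k hk
    obtain ⟨q, hq⟩ := Finset.dvd_prod_of_mem p (Finset.mem_range.2 hk)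
    show l k ^ (∏ k ∈ Finset.range K, p k) = 1
    rw [hq, pow_mul, hpl, one_pow]
  have hit : ∀ n k, (⇑T)^[n] (y k) = l k ^ n • y k := by
    intro n k
    induction n with
    | zero => simp
    | succ n ih => rw [Function.iterate_succ_apply', ih, map_smul, hT, smul_smul, pow_succ]
  have hitw : ∀ n, (⇑T)^[n] ((K : ℂ)⁻¹ • ∑ k ∈ Finset.range K, y k)
      = (K : ℂ)⁻¹ • ∑ k ∈ Finset.range K, l k ^ n • y k := by
    intro n
    rw [← FunLike.coe_pow_eq_iterate, map_smul, map_sum]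
    simp only [FunLike.coe_pow_eq_iterate, hit]
  have hKc : (K : ℂ) ≠ 0 := by exact_mod_cast hK0.ne'
  have hdiff : ∀ n, ‖(K : ℂ)⁻¹ • ∑ k ∈ Finset.range K, l k ^ n • y k
      - ((K : ℂ)⁻¹ * ∑ k ∈ Finset.range K, l k ^ n) • x‖ < ε / 2 := by
    intro n
    rw [mul_smul, ← smul_sub, Finset.sum_smul, ← Finset.sum_sub_distrib, norm_smul, norm_inv,
      Complex.norm_natCast, inv_mul_lt_iff₀ hK0]
    calc _ ≤ ∑ k ∈ Finset.range K, ‖l k ^ n • y k - l k ^ n • x‖ := norm_sum_le _ _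
      _ < ∑ k ∈ Finset.range K, ε / 2 := by
        refine Finset.sum_lt_sum_of_nonempty (by
          rw [Finset.nonempty_range_iff]; exact_mod_cast hK0.ne') fun k _ => ?_
        rw [← smul_sub, norm_smul, norm_pow, hn, one_pow, one_mul]
        exact hye k
      _ = K * (ε / 2) := by simp
  refine ⟨(K : ℂ)⁻¹ • ∑ k ∈ Finset.range K, y k, P, hP1, ?_, ?_, ?_⟩
  · rw [hitw]
    congr 1
    refine Finset.sum_congr rfl fun k hk => ?_
    rw [hlP k (Finset.mem_range.1 hk), one_smul]
  · have := hdiff 0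
    simp only [pow_zero, one_smul, Finset.sum_const, Finset.card_range, nsmul_eq_mul, mul_one,
      inv_mul_cancel₀ hKc] at this
    linarith
  · simp only [hitw]
    calc _ ≤ ∑ n ∈ Finset.range P, ((K : ℝ)⁻¹ * ‖∑ k ∈ Finset.range K, l k ^ n‖ * ‖x‖ + ε / 2) := by
          refine Finset.sum_le_sum fun n _ => ?_
          have h1 := hdiff n
          have h2 := norm_sub_norm_le ((K : ℂ)⁻¹ • ∑ k ∈ Finset.range K, l k ^ n • y k)
            (((K : ℂ)⁻¹ * ∑ k ∈ Finset.range K, l k ^ n) • x)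
          rw [norm_smul (_ * _), norm_mul, norm_inv, Complex.norm_natCast] at h2
          linarith
      _ = (K : ℝ)⁻¹ * (∑ n ∈ Finset.range P, ‖∑ k ∈ Finset.range K, l k ^ n‖) * ‖x‖ + P * (ε / 2) := by
          rw [Finset.sum_add_distrib, ← Finset.sum_mul, ← Finset.mul_sum]; simp
      _ ≤ (K : ℝ)⁻¹ * (P * √K) * (ε / 2 * √K) + P * (ε / 2) := by
          gcongr
          exact sum_roots_le l hinj K P hn hlP
      _ = ((K : ℝ)⁻¹ * (√K * √K)) * (P * (ε / 2)) + P * (ε / 2) := by ring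
      _ = ε * P := by
          rw [Real.mul_self_sqrt hK0.le, inv_mul_cancel₀ hK0.ne']; ring

lemma GoodVec.all [TopologicalSpace.SeparableSpace X]
    (hspan : ∀ D : Set ℂ, D.Countable →
      Dense (↑(Submodule.span ℂ {x : X | ∃ l : ℂ, ‖l‖ = 1 ∧ l ∉ D ∧ T x = l • x}) :
        Set X))
    (hper : {x : X | x ≠ 0 ∧ ∃ l : ℂ, ‖l‖ = 1 ∧ T x = l • x} ⊆
      closure {x : X | x ≠ 0 ∧ ∃ l : ℂ, (∃ n : ℕ, 1 ≤ n ∧ l ^ n = 1) ∧ T x = l • x})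
    (w : X) : GoodVec T w := by
  have : SecondCountableTopology X := UniformSpace.secondCountable_of_separable X
  let Lam : Set X → Set ℂ := fun B => {l | ‖l‖ = 1 ∧ ∃ y ∈ B, y ≠ 0 ∧ T y = l • y}
  set D : Set ℂ := ⋃ B ∈ {B ∈ TopologicalSpace.countableBasis X | (Lam B).Countable}, Lam B
  have hD : D.Countable :=
    Set.Countable.biUnion ((TopologicalSpace.countable_countableBasis X).mono
      (Set.sep_subset _ _)) fun B hB => hB.2
  have hsub : {x : X | ∃ l : ℂ, ‖l‖ = 1 ∧ l ∉ D ∧ T x = l • x} ⊆ {x | GoodVec T x} := by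
    rintro x ⟨l, hl, hlD, hTx⟩
    by_cases hx0 : x = 0
    · subst hx0; exact GoodVec.zero T
    refine GoodVec.of_eig T fun ε hε F hF => ?_
    obtain ⟨B, hB, hxB, hBε⟩ := (TopologicalSpace.isBasis_countableBasis X).exists_subset_of_mem_open
      (Metric.mem_ball_self (x := x) (half_pos hε)) Metric.isOpen_ball
    have hunc : ¬ (Lam B).Countable := by
      intro hc
      exact hlD (Set.mem_biUnion (show B ∈ {B ∈ TopologicalSpace.countableBasis X | (Lam B).Countable} from ⟨hB, hc⟩) ⟨hl, x, hxB, hx0, hTx⟩)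
    have : ∃ m ∈ Lam B, m ∉ F := by
      by_contra! h
      exact hunc (hF.countable.mono h)
    obtain ⟨m, ⟨hm, z, hzB, hz0, hTz⟩, hmF⟩ := this
    have hzx := hBε hzB
    rw [Metric.mem_ball, dist_eq_norm] at hzx
    obtain ⟨δ, hδ, hδF⟩ := Metric.isOpen_iff.1 hF.isClosed.isOpen_compl m hmF
    have hz0' : 0 < ‖z‖ := norm_pos_iff.2 hz0
    set η := min (ε / 2) (δ * ‖z‖ / (‖T‖ + 2)) with hη
    have hη0 : 0 < η := by positivity
    obtain ⟨y, ⟨hy0, q, ⟨n, hn1, hqn⟩, hTy⟩, hzy⟩ :=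
      Metric.mem_closure_iff.1 (hper ⟨hz0, m, hm, hTz⟩) η hη0
    have hq : ‖q‖ = 1 := Complex.norm_eq_one_of_pow_eq_one hqn (by omega)
    rw [dist_eq_norm] at hzy
    refine ⟨y, q, ?_, ?_, ⟨n, hn1, hqn⟩, hTy⟩
    · calc ‖y - x‖ = ‖(z - x) - (z - y)‖ := by congr 1; abel
        _ ≤ _ := norm_sub_le _ _
        _ < ε := by have := hzy.trans_le (min_le_left _ _); linarith
    · intro hqF
      refine (hδF (a := q) ?_) hqF
      rw [Metric.mem_ball, dist_eq_norm]
      have e1 : (q - m) • z = q • (z - y) - T (z - y) := by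
        rw [map_sub, hTz, hTy, sub_smul, smul_sub]; abel
      have e2 : ‖q - m‖ * ‖z‖ ≤ (1 + ‖T‖) * ‖z - y‖ := by
        rw [← norm_smul, e1]
        calc _ ≤ ‖q • (z - y)‖ + ‖T (z - y)‖ := norm_sub_le _ _
          _ ≤ 1 * ‖z - y‖ + ‖T‖ * ‖z - y‖ := by
            rw [norm_smul, hq]; gcongr; exact T.le_opNorm _
          _ = _ := by ring
      have e3 : (‖T‖ + 2) * ‖z - y‖ < δ * ‖z‖ := by
        have := hzy.trans_le (min_le_right _ _)
        rw [lt_div_iff₀ (by positivity)] at this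
        linarith
      have : ‖q - m‖ * ‖z‖ < δ * ‖z‖ := by nlinarith [norm_nonneg (z - y)]
      exact lt_of_mul_lt_mul_right this hz0'.le
  let M : Submodule ℂ X :=
    { carrier := {x | GoodVec T x}
      add_mem' := fun ha hb => GoodVec.add T ha hb
      zero_mem' := GoodVec.zero T
      smul_mem' := fun c _ hx => GoodVec.smul T c hx }
  have h1 : Submodule.span ℂ {x : X | ∃ l : ℂ, ‖l‖ = 1 ∧ l ∉ D ∧ T x = l • x} ≤ M :=
    Submodule.span_le.2 hsub
  have h2 : closure (↑(Submodule.span ℂ {x : X | ∃ l : ℂ, ‖l‖ = 1 ∧ l ∉ D ∧ T x = l • x}) : Set X)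
    ⊆ {x | GoodVec T x} := closure_minimal h1 (GoodVec.isClosed T)
  exact h2 (hspan D hD w)

/-- Core perturbation lemma. -/
lemma exists_periodic_near [TopologicalSpace.SeparableSpace X]
    (hgood : ∀ w, GoodVec T w) {a : X} {N : ℕ} (hN : 1 ≤ N) (ha : (⇑T)^[N] a = a)
    {V : Set X} (hV : IsOpen V) (hVn : V.Nonempty) {ε : ℝ} (hε : 0 < ε) :
    ∃ (b : X) (Q : ℕ), 1 ≤ Q ∧ (⇑T)^[N * Q] b = b ∧ b ∈ V ∧
      ∑ n ∈ Finset.range (N * Q), ‖(⇑T)^[n] b - (⇑T)^[n] a‖ ≤ ε * (N * Q : ℕ) := by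
  obtain ⟨v, hv⟩ := hVn
  obtain ⟨δ, hδ, hδV⟩ := Metric.isOpen_iff.1 hV v hv
  obtain ⟨w, P, hP, hwP, hwv, hs⟩ := hgood (v - a) (min ε δ) (lt_min hε hδ)
  refine ⟨a + w, P, hP, ?_, hδV ?_, ?_⟩
  · rw [iterate_map_add]
    congr 1
    · exact (show Function.IsPeriodicPt T N a from ha).mul_const P
    · exact (show Function.IsPeriodicPt T P w from hwP).const_mul N
  · rw [Metric.mem_ball, dist_eq_norm]
    calc ‖a + w - v‖ = ‖w - (v - a)‖ := by congr 1; abel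
      _ < δ := hwv.trans_le (min_le_right _ _)
  · simp only [iterate_map_add, add_sub_cancel_left]
    rw [Nat.mul_comm, sum_period_mul T (fun z => ‖z‖) w P N hwP]
    calc (N : ℝ) * _ ≤ N * (min ε δ * P) := by gcongr
      _ ≤ N * (ε * P) := by gcongr; exact min_le_left _ _
      _ = ε * (P * N : ℕ) := by push_cast; ring
end

section
variable {X : Type*} [NormedAddCommGroup X] [NormedSpace ℂ X] 
    [MeasurableSpace X] [BorelSpace X]

/-- Points whose orbit meets `V`. -/
def hitSet (T : X → X) (V : Set X) : Set X := ⋃ n : ℕ, (T^[n]) ⁻¹' V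

lemma isOpen_hitSet (T : X →L[ℂ] X) {V : Set X} (hV : IsOpen V) : IsOpen (hitSet T V) :=
  isOpen_iUnion fun n => hV.preimage (T.continuous.iterate n)

lemma hcSet_eq [SecondCountableTopology X] (T : X → X) :
    {x : X | Dense (Set.range fun n : ℕ => T^[n] x)} =
      ⋂ V : TopologicalSpace.countableBasis X, hitSet T V.1 := by
  ext x
  simp only [Set.mem_ofPred_eq, Set.mem_iInter, hitSet, Set.mem_iUnion, Set.mem_preimage]
  rw [(TopologicalSpace.isBasis_countableBasis X).dense_iff]
  constructor
  · rintro h ⟨V, hV⟩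
    obtain ⟨y, hy, n, rfl⟩ := h V hV (TopologicalSpace.nonempty_of_mem_countableBasis hV)
    exact ⟨n, hy⟩
  · intro h V hV _
    obtain ⟨n, hn⟩ := h ⟨V, hV⟩
    exact ⟨_, hn, n, rfl⟩

lemma isOpen_measure_gt [TopologicalSpace.SeparableSpace X] {G : Set X} (hG : IsOpen G)
    (c : ENNReal) :
    IsOpen {m : ProbabilityMeasure X | c < (m : Measure X) G} := by
  rw [isOpen_iff_mem_nhds]
  intro P hP
  have hP' : c < (P : Measure X) G := hP
  filter_upwards [P.toMeasure_add_pos_gt_mem_nhds hG (tsub_pos_of_lt hP')] with Q hQ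
  have hQ' : (P : Measure X) G < (Q : Measure X) G + ((P : Measure X) G - c) := hQ
  by_contra hcon
  have h1 : (Q : Measure X) G ≤ c := not_lt.1 hcon
  have : (P : Measure X) G < (P : Measure X) G :=
    calc _ < _ := hQ'
      _ ≤ c + ((P : Measure X) G - c) := by gcongr
      _ = _ := add_tsub_cancel_of_le hP'.le
  exact lt_irrefl _ this

lemma periodicMeasure_prob (T : X → X) (a : X) {N : ℕ} (hN : 1 ≤ N) :
    IsProbabilityMeasure (periodicMeasure T a N) := by
  constructor
  simp only [periodicMeasure, Measure.smul_apply, Measure.finsetSum_apply, measure_univ,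
    Finset.sum_const, Finset.card_range, smul_eq_mul, nsmul_eq_mul, mul_one]
  exact ENNReal.inv_mul_cancel (by simpa using (by omega : N ≠ 0)) (by simp)

lemma periodicMeasure_integral (T : X → X) (a : X) (N : ℕ) (f : X → ℝ)
    (hf : Continuous f) :
    ∫ x, f x ∂(periodicMeasure T a N) = (N : ℝ)⁻¹ * ∑ n ∈ Finset.range N, f (T^[n] a) := by
  have : ∀ z, Integrable f (Measure.dirac z) := fun z =>
    integrable_dirac' hf.stronglyMeasurable (by simp)
  rw [periodicMeasure, integral_smul_measure, integral_finsetSum_measure fun i _ => this _]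
  simp [integral_dirac]

lemma periodicMeasure_hit (T : X →L[ℂ] X) {b : X} {N : ℕ} (hN : 1 ≤ N) (hb : (⇑T)^[N] b = b)
    {V : Set X} (hV : IsOpen V) (hbV : b ∈ V) :
    periodicMeasure T b N (hitSet T V) = 1 := by
  have hp := periodicMeasure_prob T b hN
  have h1 : ∀ n ∈ Finset.range N, Measure.dirac ((⇑T)^[n] b) (hitSet T V) = 1 := by
    intro n hn
    rw [Measure.dirac_apply' _ (isOpen_hitSet T hV).measurableSet, Set.indicator_of_mem, Pi.one_apply]
    refine Set.mem_iUnion.2 ⟨N - n, ?_⟩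
    rw [Set.mem_preimage, ← Function.iterate_add_apply, Nat.sub_add_cancel, hb]
    · exact hbV
    · exact (Finset.mem_range.1 hn).le
  rw [periodicMeasure, Measure.smul_apply, Measure.finsetSum_apply, Finset.sum_congr rfl h1]
  simp only [Finset.sum_const, Finset.card_range, smul_eq_mul, nsmul_eq_mul, mul_one]
  exact ENNReal.inv_mul_cancel (by simpa using (by omega : N ≠ 0)) (by simp)

lemma periodicMeasure_integral_diff (T : X →L[ℂ] X) {a b : X} {N Q : ℕ} (hN : 1 ≤ N) (hQ : 1 ≤ Q)
    (ha : (⇑T)^[N] a = a) {ε : ℝ}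
    (hab : ∑ n ∈ Finset.range (N * Q), ‖(⇑T)^[n] b - (⇑T)^[n] a‖ ≤ ε * (N * Q : ℕ))
    (f : X → ℝ) {L : NNReal} (hf : LipschitzWith L f) :
    |∫ x, f x ∂(periodicMeasure T b (N * Q)) - ∫ x, f x ∂(periodicMeasure T a N)| ≤ L * ε := by
  rw [periodicMeasure_integral _ _ _ _ hf.continuous, periodicMeasure_integral _ _ _ _ hf.continuous]
  have hN0 : (0 : ℝ) < N := by exact_mod_cast hN
  have hQ0 : (0 : ℝ) < Q := by exact_mod_cast hQ
  have h1 : (N : ℝ)⁻¹ * ∑ n ∈ Finset.range N, f ((⇑T)^[n] a)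
      = ((N * Q : ℕ) : ℝ)⁻¹ * ∑ n ∈ Finset.range (N * Q), f ((⇑T)^[n] a) := by
    rw [sum_period_mul T f a N Q ha]
    push_cast
    field_simp
  have h0 : (0 : ℝ) < ((N * Q : ℕ) : ℝ) := by push_cast; positivity
  rw [h1, ← mul_sub, ← Finset.sum_sub_distrib, abs_mul, abs_of_pos (inv_pos.2 h0),
    inv_mul_le_iff₀ h0]
  calc _ ≤ ∑ n ∈ Finset.range (N * Q), |f ((⇑T)^[n] b) - f ((⇑T)^[n] a)| :=
        Finset.abs_sum_le_sum_abs _ _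
    _ ≤ ∑ n ∈ Finset.range (N * Q), L * ‖(⇑T)^[n] b - (⇑T)^[n] a‖ := by
        refine Finset.sum_le_sum fun n _ => ?_
        have := hf.dist_le_mul ((⇑T)^[n] b) ((⇑T)^[n] a)
        rwa [Real.dist_eq, dist_eq_norm] at this
    _ = L * ∑ n ∈ Finset.range (N * Q), ‖(⇑T)^[n] b - (⇑T)^[n] a‖ := by rw [Finset.mul_sum]
    _ ≤ L * (ε * (N * Q : ℕ)) := by gcongr
    _ = _ := by ring

lemma FT_subset [TopologicalSpace.SeparableSpace X] (T : X →L[ℂ] X) (hgood : ∀ w, GoodVec T w)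
    {V : Set X} (hV : IsOpen V) (hVn : V.Nonempty) :
    FT (⇑T) ⊆ closure {m : ProbabilityMeasure X | m ∈ FT (⇑T) ∧ (m : Measure X) (hitSet T V) = 1} := by
  rintro m ⟨k, c, a, N, hc, hN, hm⟩
  have hstep : ∀ (j : ℕ) (i : Fin k), ∃ (b : X) (Q : ℕ), 1 ≤ Q ∧ (⇑T)^[N i * Q] b = b ∧ b ∈ V ∧
      ∑ n ∈ Finset.range (N i * Q), ‖(⇑T)^[n] b - (⇑T)^[n] (a i)‖
        ≤ (1 / ((j : ℝ) + 1)) * (N i * Q : ℕ) := fun j i =>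
    exists_periodic_near T hgood (hN i).1 (hN i).2 hV hVn (by positivity)
  choose b Q hQ hbQ hbV hbs using hstep
  have hNQ : ∀ j i, 1 ≤ N i * Q j i := fun j i => Nat.mul_pos (hN i).1 (hQ j i)
  have hpr : ∀ j, IsProbabilityMeasure (∑ i, c i • periodicMeasure T (b j i) (N i * Q j i)) := by
    intro j
    constructor
    rw [Measure.finsetSum_apply, ← hc]
    refine Finset.sum_congr rfl fun i _ => ?_
    have := periodicMeasure_prob T (b j i) (hNQ j i)
    simp
  let μ : ℕ → ProbabilityMeasure X := fun j => ⟨_, hpr j⟩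
  have hctop : ∀ i, c i ≠ ⊤ := by
    intro i h
    have : c i ≤ 1 := hc ▸ Finset.single_le_sum (fun _ _ => zero_le) (Finset.mem_univ i)
    rw [h] at this
    exact absurd this (by simp)
  have hFormula : ∀ (d : Fin k → X) (R : Fin k → ℕ), (∀ i, 1 ≤ R i) → ∀ f : X → ℝ, Continuous f →
      (∃ C : ℝ, ∀ x y, dist (f x) (f y) ≤ C) →
      ∫ x, f x ∂(∑ i, c i • periodicMeasure T (d i) (R i))
        = ∑ i, (c i).toReal * ∫ x, f x ∂(periodicMeasure T (d i) (R i)) := by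
    intro d R hR f hf hfb
    rw [integral_finsetSum_measure]
    · simp [integral_smul_measure]
    · intro i _
      have := periodicMeasure_prob T (d i) (hR i)
      let f' : BoundedContinuousFunction X ℝ := ⟨⟨f, hf⟩, hfb⟩
      exact (f'.integrable (periodicMeasure T (d i) (R i))).smul_measure (hctop i)
  have hlim : Tendsto μ atTop (𝓝 m) := by
    rw [tendsto_iff_forall_lipschitz_integral_tendsto]
    rintro f hfb ⟨L, hL⟩
    rw [hm, hFormula a N (fun i => (hN i).1) f hL.continuous hfb]
    have : ∀ j, ∫ x, f x ∂(μ j : Measure X)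
        = ∑ i, (c i).toReal * ∫ x, f x ∂(periodicMeasure T (b j i) (N i * Q j i)) := fun j =>
      hFormula (b j) (fun i => N i * Q j i) (hNQ j) f hL.continuous hfb
    simp only [this]
    refine tendsto_finsetSum _ fun i _ => Tendsto.const_mul _ ?_
    rw [tendsto_iff_dist_tendsto_zero]
    refine squeeze_zero (fun _ => dist_nonneg) (fun j => ?_)
      (g := fun j : ℕ => (L : ℝ) * (1 / ((j : ℝ) + 1))) ?_
    · rw [Real.dist_eq]
      exact periodicMeasure_integral_diff T (hN i).1 (hQ j i) (hN i).2 (hbs j i) f hL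
    · simpa using (tendsto_one_div_add_atTop_nhds_zero_nat (𝕜 := ℝ)).const_mul (L : ℝ)
  refine mem_closure_of_tendsto hlim (Eventually.of_forall fun j => ⟨?_, ?_⟩)
  · exact ⟨k, c, b j, fun i => N i * Q j i, hc, fun i => ⟨hNQ j i, hbQ j i⟩, rfl⟩
  · show (∑ i, c i • periodicMeasure T (b j i) (N i * Q j i)) (hitSet T V) = 1
    rw [Measure.finsetSum_apply, ← hc]
    refine Finset.sum_congr rfl fun i _ => ?_
    rw [Measure.smul_apply, periodicMeasure_hit T (hNQ j i) (hbQ j i) hV (hbV j i)]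
    simp

end

/-- Let `T` be a bounded linear operator on a complex separable
Banach space `X`. Assume that `T` has a perfectly spanning set of unimodular
eigenvectors, and that the periodic eigenvectors of `T` are dense in the set of all
unimodular eigenvectors. Then `F̄_T(HC(T))` is a dense `G_δ` subset of `F̄_T(X)`. -/
theorem stmt18 {X : Type*} [NormedAddCommGroup X] [NormedSpace ℂ X] [CompleteSpace X]
    [TopologicalSpace.SeparableSpace X] [MeasurableSpace X] [BorelSpace X]
    (T : X →L[ℂ] X)
    (hspan : ∀ D : Set ℂ, D.Countable →
      Dense (↑(Submodule.span ℂ {x : X | ∃ l : ℂ, ‖l‖ = 1 ∧ l ∉ D ∧ T x = l • x}) :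
        Set X))
    (hper : {x : X | x ≠ 0 ∧ ∃ l : ℂ, ‖l‖ = 1 ∧ T x = l • x} ⊆
      closure {x : X | x ≠ 0 ∧ ∃ l : ℂ, (∃ n : ℕ, 1 ≤ n ∧ l ^ n = 1) ∧ T x = l • x}) :
    IsGδ {m : ↥(closure (FT (⇑T))) |
        (↑m.1 : Measure X) {x : X | Dense (Set.range fun n : ℕ => (⇑T)^[n] x)} = 1} ∧
      Dense {m : ↥(closure (FT (⇑T))) |
        (↑m.1 : Measure X) {x : X | Dense (Set.range fun n : ℕ => (⇑T)^[n] x)} = 1} := by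
  have : SecondCountableTopology X := UniformSpace.secondCountable_of_separable X
  have : BaireSpace ↥(closure (FT (⇑T))) := baire_closed isClosed_closure
  have hgood := GoodVec.all T hspan hper
  obtain ⟨c, -, hc1, hclim⟩ := exists_seq_strictMono_tendsto' (zero_lt_one (α := ENNReal))
  let U : TopologicalSpace.countableBasis X × ℕ → Set ↥(closure (FT (⇑T))) := fun p =>
    {m | c p.2 < (m.1 : Measure X) (hitSet T p.1.1)}
  have hVo : ∀ V : TopologicalSpace.countableBasis X, IsOpen V.1 := fun V =>
    TopologicalSpace.isOpen_of_mem_countableBasis V.2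
  have hUo : ∀ p, IsOpen (U p) := fun p =>
    (isOpen_measure_gt (isOpen_hitSet T (hVo p.1)) (c p.2)).preimage continuous_subtype_val
  have hUd : ∀ p, Dense (U p) := by
    intro p
    rw [Subtype.dense_iff]
    refine closure_minimal ((FT_subset T hgood (hVo p.1)
      (TopologicalSpace.nonempty_of_mem_countableBasis p.1.2)).trans (closure_mono ?_))
      isClosed_closure
    rintro m ⟨hm, hm1⟩
    refine ⟨⟨m, subset_closure hm⟩, ?_, rfl⟩
    show c p.2 < (m : Measure X) (hitSet T p.1.1)
    rw [hm1]; exact (hc1 p.2).2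
  have hc : Countable (TopologicalSpace.countableBasis X) :=
    (TopologicalSpace.countable_countableBasis X).to_subtype
  have hEq : {m : ↥(closure (FT (⇑T))) |
        (↑m.1 : Measure X) {x : X | Dense (Set.range fun n : ℕ => (⇑T)^[n] x)} = 1}
      = ⋂ p, U p := by
    ext m
    have hmeas : ∀ V : TopologicalSpace.countableBasis X, MeasurableSet (hitSet T V.1) := fun V =>
      (isOpen_hitSet T (hVo V)).measurableSet
    rw [Set.mem_ofPred_eq, hcSet_eq, Set.mem_iInter]
    rw [← mem_ae_iff_prob_eq_one (MeasurableSet.iInter hmeas), countable_iInter_mem]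
    constructor
    · intro h p
      show c p.2 < (m.1 : Measure X) (hitSet T p.1.1)
      rw [(mem_ae_iff_prob_eq_one (hmeas p.1)).1 (h p.1)]
      exact (hc1 p.2).2
    · intro h V
      rw [mem_ae_iff_prob_eq_one (hmeas V)]
      refine le_antisymm prob_le_one (le_of_tendsto' hclim fun n => ?_)
      exact (show c n < (m.1 : Measure X) (hitSet T V.1) from h (V, n)).le
  rw [hEq]
  exact ⟨IsGδ.iInter_of_isOpen hUo, dense_iInter_of_isOpen hUo hUd⟩
end

section
/- Let T be a bounded linear operator on a complex separable Banach space X. Assume that T has a perfectly spanning set of unimodular eigenvectors. Then S̄_T(HC(T)) is a dense G_δ subset of S̄_T(X); in particular, T admits an ergodic T-invariant Borel probability measure with full support. -/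
open MeasureTheory Filter Topology Set TopologicalSpace

noncomputable instance : MeasurableSpace Circle := borel Circle
instance : BorelSpace Circle := ⟨rfl⟩

/-- The normalized Haar (probability) measure on the unit circle `𝕋`. -/
noncomputable def haarCircle : Measure Circle :=
  Measure.haarMeasure (⊤ : PositiveCompacts Circle)

/-- `S_T(X)`: the family of Steinhaus measures for `T`. A Steinhaus measure is the
distribution of `∑_{j∈J} χ_j x_j` where `(x_j)_{j∈J}` is a finite family of unimodular
eigenvectors of `T` and the `χ_j` are independent random variables uniformly
distributed on `𝕋`; equivalently, it is the pushforward of the Haar probability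
measure on `𝕋^J` under `(λ_j) ↦ ∑_j λ_j • x_j`. -/
def SteinhausFamily {X : Type*} [NormedAddCommGroup X] [NormedSpace ℂ X] [MeasurableSpace X]
    (T : X → X) : Set (ProbabilityMeasure X) :=
  {μ | ∃ (k : ℕ) (x : Fin k → X) (l : Fin k → ℂ),
    (∀ j, x j ≠ 0 ∧ ‖l j‖ = 1 ∧ T (x j) = l j • x j) ∧
    (↑μ : Measure X) =
      Measure.map (fun z : Fin k → Circle => ∑ j, (z j : ℂ) • x j)
        (Measure.pi fun _ => haarCircle)}


section Kronecker

lemma circle_dist_eq (a b : Circle) : dist a b = ‖(a : ℂ) - b‖ := by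
  exact dist_eq_norm (a : ℂ) b

/-- A unimodular number all of whose powers stay close to `1` is `1`. -/
lemma circle_eq_one_of_pow_close (ρ : Circle) (h : ∀ n : ℕ, dist (ρ ^ n) 1 ≤ 3 / 4) : ρ = 1 := by
  have key : ∀ w : Circle, dist w 1 ≤ 3 / 4 → (5 / 4) * dist w 1 ≤ dist (w ^ 2) 1 := by
    intro w hw
    have e1 : dist w 1 = ‖(w : ℂ) - 1‖ := by
      rw [circle_dist_eq]; rfl
    have e2 : dist (w ^ 2) 1 = ‖(w : ℂ) - 1‖ * ‖(w : ℂ) + 1‖ := by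
      rw [circle_dist_eq, ← norm_mul]
      congr 1
      have : ((w ^ 2 : Circle) : ℂ) = (w : ℂ) ^ 2 := by simp
      have h1 : ((1 : Circle) : ℂ) = 1 := rfl
      rw [this, h1]; ring
    rw [e1] at hw ⊢
    rw [e2]
    have : (5 / 4 : ℝ) ≤ ‖(w : ℂ) + 1‖ := by
      have h2 : ‖(2 : ℂ)‖ ≤ ‖(w : ℂ) + 1‖ + ‖(w : ℂ) - 1‖ := by
        have : (2 : ℂ) = ((w : ℂ) + 1) - ((w : ℂ) - 1) := by ring
        calc ‖(2 : ℂ)‖ = ‖((w : ℂ) + 1) - ((w : ℂ) - 1)‖ := by rw [← this]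
          _ ≤ _ := norm_sub_le _ _
      have h3 : ‖(2 : ℂ)‖ = 2 := by simp
      linarith
    nlinarith [norm_nonneg ((w : ℂ) - 1)]
  have grow : ∀ k : ℕ, (5 / 4 : ℝ) ^ k * dist ρ 1 ≤ dist (ρ ^ (2 ^ k)) 1 := by
    intro k
    induction k with
    | zero => simp
    | succ k ih =>
      have := key (ρ ^ (2 ^ k)) (h _)
      rw [← pow_mul, ← pow_succ] at this
      calc (5 / 4 : ℝ) ^ (k + 1) * dist ρ 1 = 5 / 4 * ((5 / 4 : ℝ) ^ k * dist ρ 1) := by ring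
        _ ≤ 5 / 4 * dist (ρ ^ (2 ^ k)) 1 := by gcongr
        _ ≤ _ := this
  by_contra hne
  have hpos : 0 < dist ρ 1 := dist_pos.2 hne
  obtain ⟨k, hk⟩ := pow_unbounded_of_one_lt (1 / dist ρ 1) (by norm_num : (1 : ℝ) < 5 / 4)
  have h1 := grow k
  have h2 := h (2 ^ k)
  rw [div_lt_iff₀ hpos] at hk
  linarith

lemma circle_dist_mul_left (a b c : Circle) : dist (a * b) (a * c) = dist b c := by
  rw [circle_dist_eq, circle_dist_eq]
  have : ((a * b : Circle) : ℂ) - ((a * c : Circle) : ℂ) = (a : ℂ) * ((b : ℂ) - c) := by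
    rw [Circle.coe_mul, Circle.coe_mul]; ring
  rw [this, norm_mul, Circle.norm_coe, one_mul]

lemma circle_dist_mul_right (a b c : Circle) : dist (b * a) (c * a) = dist b c := by
  rw [mul_comm b, mul_comm c, circle_dist_mul_left]

/-- A closed proper subgroup of the circle has finite exponent. -/
lemma circle_closed_subgroup (F : Subgroup Circle) (hF : IsClosed (F : Set Circle))
    (hne : F ≠ ⊤) : ∃ q : ℕ, 0 < q ∧ ∀ z ∈ F, z ^ q = 1 := by
  have : Fact (0 < 2 * Real.pi) := ⟨Real.two_pi_pos⟩
  let s : AddSubgroup (AddCircle (2 * Real.pi)) :=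
    { carrier := {a | AddCircle.toCircle a ∈ F}
      add_mem' := by
        intro a b ha hb
        simp only [Set.mem_ofPred_eq, AddCircle.toCircle_add] at *
        exact F.mul_mem ha hb
      zero_mem' := by
        simp only [Set.mem_ofPred_eq, AddCircle.toCircle_zero]
        exact F.one_mem
      neg_mem' := by
        intro a ha
        simp only [Set.mem_ofPred_eq, AddCircle.toCircle_neg] at *
        exact F.inv_mem ha }
  have hsc : IsClosed (s : Set (AddCircle (2 * Real.pi))) :=
    hF.preimage AddCircle.continuous_toCircle
  have hsurj : ∀ z : Circle, ∃ a : AddCircle (2 * Real.pi), AddCircle.toCircle a = z := by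
    intro z
    exact ⟨(AddCircle.homeomorphCircle Real.two_pi_pos.ne').symm z, by
      rw [← AddCircle.homeomorphCircle_apply Real.two_pi_pos.ne']; simp⟩
  have hnd : ¬ Dense (s : Set (AddCircle (2 * Real.pi))) := by
    intro hd
    apply hne
    rw [eq_top_iff]
    intro z _
    obtain ⟨a, rfl⟩ := hsurj z
    have : a ∈ closure (s : Set (AddCircle (2 * Real.pi))) := hd a
    rw [hsc.closure_eq] at this
    exact this
  rw [AddCircle.dense_addSubgroup_iff_ne_zmultiples] at hnd
  push Not at hnd
  obtain ⟨a, ha, hsa⟩ := hnd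
  refine ⟨addOrderOf a, ?_, ?_⟩
  · first | exact ha.addOrderOf_pos | exact Nat.pos_of_ne_zero ha
  · intro z hz
    obtain ⟨b, rfl⟩ := hsurj z
    have hb : b ∈ s := hz
    rw [hsa] at hb
    obtain ⟨n, rfl⟩ := AddSubgroup.mem_zmultiples_iff.1 hb
    rw [← AddCircle.toCircle_nsmul, smul_comm, addOrderOf_nsmul_eq_zero, smul_zero,
      AddCircle.toCircle_zero]

variable {G : Type*} [CommGroup G] [TopologicalSpace G] [IsTopologicalGroup G] [CompactSpace G]

lemma countable_characters (g : G) (W : Set G) (hW : W ∈ 𝓝 (1 : G)) :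
    {ν : Circle | ∀ n : ℤ, g ^ n ∈ W → dist (ν ^ n) 1 ≤ 1 / 4}.Countable := by
  classical
  set Λ := {ν : Circle | ∀ n : ℤ, g ^ n ∈ W → dist (ν ^ n) 1 ≤ 1 / 4} with hΛ
  -- syndeticity
  have hsynd : ∃ R : Finset ℤ, ∀ n : ℤ, ∃ r ∈ R, g ^ (n - r) ∈ W := by
    have hc : Tendsto (fun p : G × G => p.1 * p.2⁻¹) (𝓝 ((1 : G), (1 : G))) (𝓝 1) := by
      have : Continuous (fun p : G × G => p.1 * p.2⁻¹) := by fun_prop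
      simpa using this.tendsto ((1 : G), (1 : G))
    have hU := hc hW
    rw [nhds_prod_eq, mem_map, mem_prod_self_iff] at hU
    obtain ⟨U, hU1, hUW⟩ := hU
    have hnb : ∀ x : G, {y | x⁻¹ * y ∈ U} ∈ 𝓝 x := by
      intro x
      have : Tendsto (fun y => x⁻¹ * y) (𝓝 x) (𝓝 1) := by
        have : Continuous (fun y : G => x⁻¹ * y) := by fun_prop
        simpa using this.tendsto x
      exact this hU1
    obtain ⟨t, -, ht⟩ := isCompact_univ.elim_nhds_subcover (fun x => {y | x⁻¹ * y ∈ U})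
      (fun x _ => hnb x)
    let pick : G → ℤ := fun x => if h : ∃ r : ℤ, x⁻¹ * g ^ r ∈ U then h.choose else 0
    refine ⟨t.image pick, fun n => ?_⟩
    have hn := ht (Set.mem_univ (g ^ n))
    simp only [Set.mem_iUnion] at hn
    obtain ⟨x, hxt, hx⟩ := hn
    have hex : ∃ r : ℤ, x⁻¹ * g ^ r ∈ U := ⟨n, hx⟩
    have hp : x⁻¹ * g ^ (pick x) ∈ U := by
      simp only [pick, dif_pos hex]
      exact hex.choose_spec
    refine ⟨pick x, Finset.mem_image_of_mem _ hxt, ?_⟩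
    have := hUW (Set.mk_mem_prod hx hp)
    simp only [Set.mem_preimage] at this
    convert this using 1
    rw [zpow_sub, mul_inv, inv_inv, mul_comm x⁻¹, mul_assoc, ← mul_assoc x⁻¹, inv_mul_cancel,
      one_mul]
  obtain ⟨R, hR⟩ := hsynd
  have hsep : ∀ ν ∈ Λ, ∀ ν' ∈ Λ, (∀ r ∈ R, dist (ν ^ r) (ν' ^ r) < 1 / 4) → ν = ν' := by
    intro ν hν ν' hν' hd
    have : ν * ν'⁻¹ = 1 := by
      apply circle_eq_one_of_pow_close
      intro n
      obtain ⟨r, hr, hrW⟩ := hR n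
      have h1 := hν _ hrW
      have h2 := hν' _ hrW
      have h3 := hd r hr
      have e1 : dist ((ν * ν'⁻¹) ^ n) 1 = dist (ν ^ (n : ℤ)) (ν' ^ (n : ℤ)) := by
        rw [mul_pow, inv_pow, ← circle_dist_mul_right (ν' ^ n) _ 1]
        simp
      have e2 : ∀ w : Circle, w ^ (n : ℤ) = w ^ ((n : ℤ) - r) * w ^ r := by
        intro w; rw [← zpow_add]; simp
      rw [e1, e2 ν, e2 ν']
      calc dist (ν ^ ((n : ℤ) - r) * ν ^ r) (ν' ^ ((n : ℤ) - r) * ν' ^ r)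
          ≤ dist (ν ^ ((n : ℤ) - r) * ν ^ r) (1 * ν ^ r) + dist (1 * ν ^ r) (1 * ν' ^ r)
            + dist (1 * ν' ^ r) (ν' ^ ((n : ℤ) - r) * ν' ^ r) := dist_triangle4 _ _ _ _
        _ ≤ 3 / 4 := by
            rw [circle_dist_mul_right, circle_dist_mul_right, circle_dist_mul_left, dist_comm 1]
            linarith
    exact mul_inv_eq_one.1 this
  have hdisc : DiscreteTopology Λ := by
    rw [discreteTopology_iff_isOpen_singleton]
    rintro ⟨ν, hν⟩
    have : ({⟨ν, hν⟩} : Set Λ) = ⋂ r ∈ R, {ν' : Λ | dist (ν ^ r) ((ν' : Circle) ^ r) < 1 / 4} := by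
      ext ν'
      simp only [Set.mem_singleton_iff, Set.mem_iInter, Set.mem_ofPred_eq]
      constructor
      · rintro rfl r _; simp
      · intro h
        exact Subtype.ext (hsep ν hν ν' ν'.2 h).symm
    rw [this]
    refine isOpen_biInter_finset fun r _ => ?_
    refine isOpen_lt ?_ continuous_const
    exact continuous_const.dist (continuous_subtype_val.zpow r)
  have : Countable Λ := countable_of_Lindelof_of_discrete
  exact Set.countable_coe_iff.1 this

/-- All but countably many `μ` are independent of `g`. -/
lemma countable_dependent [FirstCountableTopology G] [T2Space G] (g : G) :
    {μ : Circle | ¬ ∀ z : Circle, (((1 : G), z) : G × Circle) ∈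
      closure (range (fun n : ℕ => (g, μ) ^ n))}.Countable := by
  obtain ⟨W, hW⟩ := (𝓝 (1 : G)).exists_antitone_basis
  have hcov : {μ : Circle | ¬ ∀ z : Circle, (((1 : G), z) : G × Circle) ∈
      closure (range (fun n : ℕ => (g, μ) ^ n))} ⊆
      ⋃ k : ℕ, ⋃ q : ℕ, {μ | 0 < q ∧ μ ^ q ∈
        {ν : Circle | ∀ n : ℤ, g ^ n ∈ W k → dist (ν ^ n) 1 ≤ 1 / 4}} := by
    intro μ hμ
    rw [Set.mem_ofPred_eq, ← closure_range_zpow_eq_pow] at hμ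
    set H : Subgroup (G × Circle) := (Subgroup.zpowers (g, μ)).topologicalClosure with hH
    have hHm : ∀ p, p ∈ H ↔ p ∈ closure (range (fun n : ℤ => (g, μ) ^ n)) := fun p => Iff.rfl
    have hHc : IsClosed (H : Set (G × Circle)) := Subgroup.isClosed_topologicalClosure _
    let F : Subgroup Circle := H.comap (MonoidHom.inr G Circle)
    have hF : IsClosed (F : Set Circle) := by
      refine hHc.preimage (f := fun z : Circle => ((1 : G), z)) ?_
      fun_prop
    have hFne : F ≠ ⊤ := by
      intro h
      apply hμ
      intro z
      have : z ∈ F := by rw [h]; trivial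
      exact this
    obtain ⟨q, hq, hqF⟩ := circle_closed_subgroup F hF hFne
    let B : Set (G × Circle) := H ∩ {p | 1 / 4 ≤ dist (p.2 ^ q) 1}
    have hB : IsCompact B := by
      apply IsClosed.isCompact
      apply hHc.inter
      refine isClosed_le continuous_const ?_
      fun_prop
    have hB1 : (Prod.fst '' B)ᶜ ∈ 𝓝 (1 : G) := by
      refine (hB.image continuous_fst).isClosed.isOpen_compl.mem_nhds ?_
      rintro ⟨⟨a, z⟩, ⟨hpH, hpd⟩, rfl : a = 1⟩
      have hz : z ^ q = 1 := hqF z hpH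
      have hpd' : 1 / 4 ≤ dist (z ^ q) 1 := hpd
      rw [hz, dist_self] at hpd'
      norm_num at hpd'
    obtain ⟨k, -, hk⟩ := hW.1.mem_iff.1 hB1
    simp only [Set.mem_iUnion]
    refine ⟨k, q, hq, fun n hn => ?_⟩
    by_contra hcon
    push Not at hcon
    apply hk hn
    refine ⟨(g, μ) ^ n, ⟨?_, ?_⟩, rfl⟩
    · exact Subgroup.le_topologicalClosure _ (Subgroup.zpow_mem_zpowers _ _)
    · have : ((μ ^ n) ^ q) = (μ ^ q) ^ n := by
        rw [← zpow_natCast, ← zpow_natCast, ← zpow_mul, ← zpow_mul, mul_comm]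
      show 1 / 4 ≤ dist ((μ ^ n) ^ q) 1
      rw [this]
      exact hcon.le
  refine Set.Countable.mono hcov ?_
  refine Set.countable_iUnion fun k => Set.countable_iUnion fun q => ?_
  rcases Nat.eq_zero_or_pos q with rfl | hq
  · simp
  · have hc := countable_characters g (W k) (hW.1.mem_of_mem trivial)
    refine Set.Countable.mono (s₂ := ⋃ ν ∈ {ν : Circle | ∀ n : ℤ, g ^ n ∈ W k →
      dist (ν ^ n) 1 ≤ 1 / 4}, {μ : Circle | μ ^ q = ν}) ?_ ?_
    · intro μ hμ
      simp only [Set.mem_iUnion]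
      exact ⟨μ ^ q, hμ.2, rfl⟩
    · refine hc.biUnion fun ν _ => ?_
      apply Set.Finite.countable
      have hfin : {x : ℂ | x ^ q = (ν : ℂ)}.Finite := by
        refine ((Polynomial.nthRoots q (ν : ℂ)).toFinset.finite_toSet).subset fun x hx => ?_
        simpa [Polynomial.mem_nthRoots hq] using hx
      refine Set.Finite.subset (hfin.preimage (f := fun μ : Circle => (μ : ℂ))
        (Circle.coe_injective.injOn)) fun (μ : Circle) hμ => ?_
      have hμ' : μ ^ q = ν := hμ
      show (μ : ℂ) ^ q = (ν : ℂ)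
      rw [← hμ', Circle.coe_pow]

/-- `l` can be steered: the coordinates `< k` can be kept close to any orbit point while the
coordinates in `[k, k')` are brought close to any target. -/
def Reach (k k' : ℕ) (l : ℕ → Circle) : Prop :=
  ∀ (n₀ : ℕ) (z : ℕ → Circle) (ε : ℝ), 0 < ε → ∃ n : ℕ,
    (∀ j < k, dist (l j ^ n) (l j ^ n₀) < ε) ∧ ∀ j, k ≤ j → j < k' → dist (l j ^ n) (z j) < ε

lemma Reach.congr {k k' : ℕ} {l l' : ℕ → Circle} (h : Reach k k' l) (hl : ∀ j < k', l' j = l j)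
    (hk : k ≤ k') : Reach k k' l' := by
  intro n₀ z ε hε
  obtain ⟨n, h1, h2⟩ := h n₀ z ε hε
  refine ⟨n, fun j hj => ?_, fun j hj hj' => ?_⟩
  · rw [hl j (by omega)]; exact h1 j hj
  · rw [hl j hj']; exact h2 j hj hj'

lemma exists_reach (k m : ℕ) (l : ℕ → Circle) (Λ : ℕ → Set Circle)
    (hΛ : ∀ j, ¬ (Λ j).Countable) :
    ∃ l' : ℕ → Circle, (∀ j < k, l' j = l j) ∧ (∀ j, k ≤ j → j < k + m → l' j ∈ Λ j) ∧
      Reach k (k + m) l' := by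
  classical
  induction m with
  | zero =>
    refine ⟨l, fun _ _ => rfl, fun j _ _ => by omega, fun n₀ z ε hε => ⟨n₀, ?_, ?_⟩⟩
    · intro j _; simpa using hε
    · intro j _ _; omega
  | succ m ih =>
    obtain ⟨l', h1, h2, h3⟩ := ih
    obtain ⟨μ, hμΛ, hμ⟩ : ∃ μ ∈ Λ (k + m), ∀ z : Circle, (((1 : ℕ → Circle), z)) ∈
        closure (range (fun n : ℕ => (l', μ) ^ n)) := by
      by_contra hcon
      push Not at hcon
      apply hΛ (k + m)
      refine (countable_dependent l').mono fun μ hμ => ?_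
      simpa using hcon μ hμ
    refine ⟨Function.update l' (k + m) μ, ?_, ?_, ?_⟩
    · intro j hj
      rw [Function.update_of_ne (by omega)]; exact h1 j hj
    · intro j hj hj'
      rcases eq_or_ne j (k + m) with rfl | hne
      · simpa using hμΛ
      · rw [Function.update_of_ne hne]; exact h2 j hj (by omega)
    · intro n₀ z ε hε
      obtain ⟨n₁, ha, hb⟩ := h3 n₀ z (ε / 2) (by positivity)
      have hcl := hμ (z (k + m) * (μ ^ n₁)⁻¹)
      rw [mem_closure_iff] at hcl
      obtain ⟨_, ⟨hp1, hp2⟩, ⟨n₂, rfl⟩⟩ := hcl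
        ({p : (ℕ → Circle) × Circle | ∀ j ∈ Finset.range (k + m), dist (p.1 j) 1 < ε / 2} ∩
          {p : (ℕ → Circle) × Circle | dist p.2 (z (k + m) * (μ ^ n₁)⁻¹) < ε})
        (by
          apply IsOpen.inter
          · have : {p : (ℕ → Circle) × Circle | ∀ j ∈ Finset.range (k + m),
                dist (p.1 j) 1 < ε / 2} = ⋂ j ∈ Finset.range (k + m),
                {p : (ℕ → Circle) × Circle | dist (p.1 j) 1 < ε / 2} := by
              ext p; simp
            rw [this]
            refine isOpen_biInter_finset fun j _ => ?_
            refine isOpen_lt ?_ continuous_const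
            fun_prop
          · refine isOpen_lt ?_ continuous_const
            fun_prop)
        ⟨by intro j _; simpa using hε, by simpa using hε⟩
      have hold : ∀ j < k + m, ∀ w : Circle, dist (l' j ^ n₁) w < ε / 2 →
          dist (l' j ^ (n₁ + n₂)) w < ε := by
        intro j hj w hw
        have hs : dist (l' j ^ n₂) 1 < ε / 2 := hp1 j (Finset.mem_range.2 hj)
        calc dist (l' j ^ (n₁ + n₂)) w
            ≤ dist (l' j ^ (n₁ + n₂)) (l' j ^ n₁ * 1) + dist (l' j ^ n₁ * 1) w :=
              dist_triangle _ _ _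
          _ < ε := by
              rw [pow_add, circle_dist_mul_left, mul_one]; linarith
      refine ⟨n₁ + n₂, ?_, ?_⟩
      · intro j hj
        rw [Function.update_of_ne (by omega)]
        exact hold j (by omega) _ (ha j hj)
      · intro j hj hj'
        rcases eq_or_ne j (k + m) with rfl | hne
        · have hs : dist (μ ^ n₂) (z (k + m) * (μ ^ n₁)⁻¹) < ε := hp2
          rw [Function.update_self, pow_add, mul_comm]
          rw [← circle_dist_mul_right (μ ^ n₁)] at hs
          simpa using hs
        · rw [Function.update_of_ne hne]
          exact hold j (by omega) _ (hb j hj (by omega))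

end Kronecker

section HaarTorus

/-- The Haar probability measure on the infinite torus. -/
noncomputable def torusHaar : Measure (ℕ → Circle) :=
  Measure.haarMeasure (⊤ : PositiveCompacts (ℕ → Circle))

instance : IsProbabilityMeasure haarCircle := by
  refine ⟨?_⟩
  simpa [haarCircle] using
    (Measure.haarMeasure_self (K₀ := (⊤ : PositiveCompacts Circle)))

instance : Measure.IsHaarMeasure haarCircle := by
  unfold haarCircle; infer_instance

instance : IsProbabilityMeasure torusHaar := by
  refine ⟨?_⟩
  simpa [torusHaar] using
    (Measure.haarMeasure_self (K₀ := (⊤ : PositiveCompacts (ℕ → Circle))))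

instance : Measure.IsHaarMeasure torusHaar := by
  unfold torusHaar; infer_instance

instance : Measure.Regular torusHaar := by
  unfold torusHaar; infer_instance

instance : Measure.InnerRegular torusHaar := by
  infer_instance

lemma torusHaar_coord (k : ℕ) : MeasurePreserving (fun (z : ℕ → Circle) (j : Fin k) => z j)
    torusHaar (Measure.pi fun _ => haarCircle) := by
  let f : (ℕ → Circle) →* (Fin k → Circle) :=
    { toFun := fun z j => z j
      map_one' := rfl
      map_mul' := fun _ _ => rfl }
  have hf : Continuous f := by
    show Continuous (fun (z : ℕ → Circle) (j : Fin k) => z j)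
    fun_prop
  have hs : Function.Surjective f := by
    intro y
    refine ⟨fun j => if h : j < k then y ⟨j, h⟩ else 1, ?_⟩
    ext j
    show (((if h : (j : ℕ) < k then y ⟨j, h⟩ else 1) : Circle) : ℂ) = _
    rw [dif_pos j.2]
  exact f.measurePreserving (μ := torusHaar) (ν := Measure.pi fun _ => haarCircle) hf hs (by simp)

lemma integrable_torus {E : Type*} [NormedAddCommGroup E] {f : (ℕ → Circle) → E}
    (hf : Continuous f) : Integrable f torusHaar := by
  obtain ⟨C, hC⟩ := isCompact_univ.exists_bound_of_continuousOn hf.continuousOn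
  have : CompactSpace (ℕ → Circle) := inferInstance
  have h := hf.continuousOn.integrableOn_compact (μ := torusHaar) isCompact_univ
  rwa [integrableOn_univ] at h

lemma circle_cont : Continuous (fun z : Circle => (z : ℂ)) := continuous_subtype_val

lemma integral_coord_mul (i j : ℕ) :
    ∫ z : ℕ → Circle, (z i : ℂ) * (starRingEnd ℂ) (z j : ℂ) ∂torusHaar = if i = j then 1 else 0 := by
  split_ifs with h
  · subst h
    have : ∀ z : ℕ → Circle, (z i : ℂ) * (starRingEnd ℂ) (z i : ℂ) = 1 := by
      intro z
      rw [Complex.mul_conj, Circle.normSq_coe]; simp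
    simp [this]
  · have hinv := integral_mul_left_eq_self (μ := torusHaar)
      (fun z : ℕ → Circle => (z i : ℂ) * (starRingEnd ℂ) (z j : ℂ))
      (Function.update (1 : ℕ → Circle) i (-1))
    have : ∀ z : ℕ → Circle, (((Function.update (1 : ℕ → Circle) i (-1) * z : ℕ → Circle) i : Circle) : ℂ) *
        (starRingEnd ℂ) (((Function.update (1 : ℕ → Circle) i (-1) * z : ℕ → Circle) j : Circle) : ℂ)
        = - ((z i : ℂ) * (starRingEnd ℂ) (z j : ℂ)) := by
      intro z
      rw [Pi.mul_apply, Pi.mul_apply, Function.update_self, Function.update_of_ne (Ne.symm h)]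
      simp
    simp only [this] at hinv
    rw [integral_neg] at hinv
    exact self_eq_neg.1 hinv.symm

lemma integral_norm_sum_le (S : Finset ℕ) :
    ∫ z : ℕ → Circle, ‖∑ i ∈ S, (z i : ℂ)‖ ∂torusHaar ≤ Real.sqrt S.card := by
  have hcont : Continuous (fun z : ℕ → Circle => ∑ i ∈ S, (z i : ℂ)) := by
    refine continuous_finsetSum _ fun i _ => ?_
    exact circle_cont.comp (continuous_apply i)
  have hsq : ∫ z : ℕ → Circle, ‖∑ i ∈ S, (z i : ℂ)‖ ^ 2 ∂torusHaar = S.card := by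
    have h1 : ∀ z : ℕ → Circle, ((‖∑ i ∈ S, (z i : ℂ)‖ ^ 2 : ℝ) : ℂ) =
        ∑ i ∈ S, ∑ j ∈ S, (z i : ℂ) * (starRingEnd ℂ) (z j : ℂ) := by
      intro z
      rw [← Finset.sum_mul_sum, ← map_sum, Complex.mul_conj, Complex.normSq_eq_norm_sq]
    have h2 : ((∫ z : ℕ → Circle, ‖∑ i ∈ S, (z i : ℂ)‖ ^ 2 ∂torusHaar : ℝ) : ℂ) = S.card := by
      rw [← integral_complex_ofReal]
      simp only [h1]
      have hc : ∀ i j : ℕ, Continuous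
          (fun z : ℕ → Circle => (z i : ℂ) * (starRingEnd ℂ) (z j : ℂ)) := by
        intro i j
        have := circle_cont.comp (continuous_apply (A := fun _ : ℕ => Circle) i)
        have h' := circle_cont.comp (continuous_apply (A := fun _ : ℕ => Circle) j)
        exact this.mul (Complex.continuous_conj.comp h')
      rw [integral_finsetSum _ (fun i _ => integrable_torus
        (continuous_finsetSum _ fun j _ => hc i j))]
      have : ∀ i ∈ S, ∫ z : ℕ → Circle, ∑ j ∈ S, (z i : ℂ) * (starRingEnd ℂ) (z j : ℂ) ∂torusHaar
          = 1 := by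
        intro i hi
        rw [integral_finsetSum _ (fun j _ => integrable_torus (hc i j))]
        simp [integral_coord_mul, hi]
      rw [Finset.sum_congr rfl this]
      simp
    exact_mod_cast h2
  rcases S.eq_empty_or_nonempty with rfl | hne
  · simp
  set t := Real.sqrt S.card with ht
  have htpos : 0 < t := Real.sqrt_pos.2 (by exact_mod_cast hne.card_pos)
  have htt : t ^ 2 = S.card := Real.sq_sqrt (by positivity)
  have hle : ∫ z : ℕ → Circle, 2 * t * ‖∑ i ∈ S, (z i : ℂ)‖ ∂torusHaar ≤
      ∫ z : ℕ → Circle, (‖∑ i ∈ S, (z i : ℂ)‖ ^ 2 + t ^ 2) ∂torusHaar := by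
    apply integral_mono
    · exact integrable_torus (continuous_const.mul hcont.norm)
    · exact integrable_torus ((hcont.norm.pow 2).add continuous_const)
    · intro z
      show 2 * t * ‖∑ i ∈ S, (z i : ℂ)‖ ≤ ‖∑ i ∈ S, (z i : ℂ)‖ ^ 2 + t ^ 2
      nlinarith [sq_nonneg (‖∑ i ∈ S, (z i : ℂ)‖ - t)]
  have hadd : ∫ z : ℕ → Circle, (‖∑ i ∈ S, (z i : ℂ)‖ ^ 2 + t ^ 2) ∂torusHaar =
      ∫ z : ℕ → Circle, ‖∑ i ∈ S, (z i : ℂ)‖ ^ 2 ∂torusHaar + ∫ z : ℕ → Circle, t ^ 2 ∂torusHaar :=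
    integral_add (integrable_torus (hcont.norm.pow 2)) (integrable_torus continuous_const)
  rw [integral_const_mul, hadd, hsq] at hle
  simp only [integral_const, probReal_univ, one_smul, smul_eq_mul, one_mul] at hle
  rw [← htt] at hle
  nlinarith

end HaarTorus

section Operator

variable {X : Type*} [NormedAddCommGroup X] [NormedSpace ℂ X]

lemma exists_circle_coe (l : ℂ) (hl : ‖l‖ = 1) : ∃ μ : Circle, (μ : ℂ) = l :=
  ⟨⟨l, mem_sphere_zero_iff_norm.2 hl⟩, rfl⟩

/-- The finite random sum `∑_{j<k} z_j x_j`. -/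
noncomputable def fsum (k : ℕ) (x : ℕ → X) (z : ℕ → Circle) : X :=
  ∑ j ∈ Finset.range k, (z j : ℂ) • x j

lemma continuous_fsum (k : ℕ) (x : ℕ → X) : Continuous (fsum k x) := by
  unfold fsum
  refine continuous_finsetSum _ fun i _ => ?_
  exact (circle_cont.comp (continuous_apply i)).smul continuous_const

lemma fsum_congr {k : ℕ} {x x' : ℕ → X} (h : ∀ j < k, x' j = x j) (z : ℕ → Circle) :
    fsum k x' z = fsum k x z :=
  Finset.sum_congr rfl fun j hj => by rw [h j (Finset.mem_range.1 hj)]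

lemma map_fsum (T : X →L[ℂ] X) {k : ℕ} {x : ℕ → X} {l : ℕ → Circle}
    (h : ∀ j < k, T (x j) = (l j : ℂ) • x j) (z : ℕ → Circle) :
    T (fsum k x z) = fsum k x (l * z) := by
  unfold fsum
  rw [map_sum]
  refine Finset.sum_congr rfl fun j hj => ?_
  rw [map_smul, h j (Finset.mem_range.1 hj), smul_smul, Pi.mul_apply, Circle.coe_mul, mul_comm]

lemma iterate_fsum (T : X →L[ℂ] X) {k : ℕ} {x : ℕ → X} {l : ℕ → Circle}
    (h : ∀ j < k, T (x j) = (l j : ℂ) • x j) (n : ℕ) (z : ℕ → Circle) :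
    (⇑T)^[n] (fsum k x z) = fsum k x (l ^ n * z) := by
  induction n with
  | zero => simp
  | succ n ih =>
    rw [Function.iterate_succ_apply', ih, map_fsum T h, pow_succ', mul_assoc]

lemma norm_fsum_sub_le (k : ℕ) (x : ℕ → X) (a b : ℕ → Circle) (η : ℝ)
    (h : ∀ j < k, dist (a j) (b j) ≤ η) :
    ‖fsum k x a - fsum k x b‖ ≤ η * ∑ j ∈ Finset.range k, ‖x j‖ := by
  unfold fsum
  rw [← Finset.sum_sub_distrib, Finset.mul_sum]
  refine norm_sum_le_of_le _ fun j hj => ?_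
  rw [← sub_smul, norm_smul, ← circle_dist_eq]
  exact mul_le_mul_of_nonneg_right (h j (Finset.mem_range.1 hj)) (norm_nonneg _)

/-- unimodular eigenvalues with an eigenvector close to `e`. -/
def eigNear (T : X →L[ℂ] X) (e : X) (ε : ℝ) : Set Circle :=
  {μ | ∃ f : X, f ≠ 0 ∧ ‖f - e‖ < ε ∧ T f = (μ : ℂ) • f}

/-- vectors approximated by eigenvectors with uncountably many eigenvalues. -/
def goodVec (T : X →L[ℂ] X) : Set X := {e | ∀ ε : ℝ, 0 < ε → ¬ (eigNear T e ε).Countable}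

lemma goodVec_dense [SeparableSpace X] (T : X →L[ℂ] X)
    (hspan : ∀ D : Set ℂ, D.Countable →
      Dense (↑(Submodule.span ℂ {x : X | ∃ l : ℂ, ‖l‖ = 1 ∧ l ∉ D ∧ T x = l • x}) : Set X)) :
    Dense (↑(Submodule.span ℂ (goodVec T)) : Set X) := by
  have : SecondCountableTopology X := UniformSpace.secondCountable_of_separable X
  let ev : Set X → Set Circle := fun b => {μ | ∃ f ∈ b, f ≠ 0 ∧ T f = (μ : ℂ) • f}
  let D : Set ℂ := ⋃ b ∈ {b ∈ countableBasis X | (ev b).Countable}, (fun μ : Circle => (μ : ℂ)) '' (ev b)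
  have hD : D.Countable := by
    refine Set.Countable.biUnion ((countable_countableBasis X).mono fun b hb => hb.1) ?_
    intro b hb
    exact hb.2.image _
  refine (hspan D hD).mono ?_
  rw [SetLike.coe_subset_coe, Submodule.span_le]
  rintro x ⟨l, hl, hlD, hx⟩
  rcases eq_or_ne x 0 with rfl | hx0
  · exact Submodule.zero_mem _
  refine Submodule.subset_span ?_
  intro ε hε hcount
  obtain ⟨b, hb, hxb, hbsub⟩ := (isBasis_countableBasis X).exists_subset_of_mem_open
    (Metric.mem_ball_self hε : x ∈ Metric.ball x ε) Metric.isOpen_ball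
  obtain ⟨μ, rfl⟩ := exists_circle_coe l hl
  apply hlD
  simp only [D, Set.mem_iUnion]
  refine ⟨b, ⟨hb, hcount.mono ?_⟩, μ, ⟨x, hxb, hx0, hx⟩, rfl⟩
  rintro ν ⟨f, hf, hf0, hfν⟩
  exact ⟨f, hf0, by simpa [dist_eq_norm] using hbsub hf, hfν⟩

lemma goodVec_nonempty [Nontrivial X] (T : X →L[ℂ] X)
    (h : Dense (↑(Submodule.span ℂ (goodVec T)) : Set X)) : (goodVec T).Nonempty := by
  by_contra hne
  rw [Set.not_nonempty_iff_eq_empty] at hne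
  rw [hne, Submodule.span_empty] at h
  obtain ⟨x, hx⟩ := exists_ne (0 : X)
  have := h x
  simp only [Submodule.bot_coe, closure_singleton, Set.mem_singleton_iff] at this
  exact hx this

lemma exists_cover (S : Set X) (hS : Dense (↑(Submodule.span ℂ S) : Set X)) (e₀ : X) (he₀ : e₀ ∈ S)
    (K : Set X) (hK : IsCompact K) (ε : ℝ) (hε : 0 < ε) :
    ∃ (E : Finset X) (M : ℕ), (↑E : Set X) ⊆ S ∧ e₀ ∈ E ∧ 0 < M ∧
      ∀ u ∈ K, ∃ c : X → ℂ, (∀ e, ‖c e‖ ≤ M) ∧ ‖u - ∑ e ∈ E, c e • e‖ < ε := by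
  classical
  let ι := {E : Finset X // (↑E : Set X) ⊆ S ∧ e₀ ∈ E} × ℕ
  let U : ι → Set X := fun p =>
    ⋃ c ∈ {c : X → ℂ | ∀ e, ‖c e‖ ≤ p.2}, Metric.ball (∑ e ∈ p.1.1, c e • e) ε
  have hmem : ∀ (p : ι) (u : X), u ∈ U p ↔
      ∃ c : X → ℂ, (∀ e, ‖c e‖ ≤ p.2) ∧ ‖u - ∑ e ∈ p.1.1, c e • e‖ < ε := by
    intro p u
    simp [U, dist_eq_norm]
  have hmono : ∀ p q : ι, p.1.1 ⊆ q.1.1 → p.2 ≤ q.2 → U p ⊆ U q := by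
    intro p q h1 h2 u hu
    rw [hmem] at hu ⊢
    obtain ⟨c, hc, hcu⟩ := hu
    refine ⟨fun e => if e ∈ p.1.1 then c e else 0, ?_, ?_⟩
    · intro e
      dsimp only
      split_ifs
      · exact (hc e).trans (by exact_mod_cast h2)
      · simp
    · have : ∑ e ∈ q.1.1, (if e ∈ p.1.1 then c e else 0) • e = ∑ e ∈ p.1.1, c e • e := by
        rw [← Finset.sum_subset h1]
        · exact Finset.sum_congr rfl fun e he => by rw [if_pos he]
        · intro e _ he
          rw [if_neg he, zero_smul]
      rw [this]; exact hcu
  have hne : Nonempty ι := ⟨⟨⟨{e₀}, by simpa using he₀, by simp⟩, 0⟩⟩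
  obtain ⟨p, hp⟩ := hK.elim_directed_cover U
    (fun p => isOpen_biUnion fun _ _ => Metric.isOpen_ball)
    (by
      intro u _
      obtain ⟨y, hy, hyu⟩ := Metric.mem_closure_iff.1 (hS u) ε hε
      obtain ⟨c, hcS, hcy⟩ := (Submodule.mem_span_set).1 hy
      obtain ⟨M, hM⟩ : ∃ M : ℕ, ∀ e, ‖c e‖ ≤ M := by
        obtain ⟨M, hM⟩ := exists_nat_ge (∑ e ∈ c.support, ‖c e‖)
        refine ⟨M, fun e => ?_⟩
        by_cases he : e ∈ c.support
        · exact (Finset.single_le_sum (f := fun e => ‖c e‖) (fun _ _ => norm_nonneg _) he).trans hM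
        · simp [Finsupp.notMem_support_iff.1 he]
      refine Set.mem_iUnion.2 ⟨⟨⟨insert e₀ c.support, ?_, by simp⟩, M⟩, ?_⟩
      · intro e he
        rw [Finset.coe_insert] at he
        rcases he with rfl | he
        · exact he₀
        · exact hcS he
      · rw [hmem]
        refine ⟨c, hM, ?_⟩
        have : ∑ e ∈ insert e₀ c.support, c e • e = y := by
          rw [← hcy, Finsupp.sum]
          symm
          apply Finset.sum_subset (Finset.subset_insert _ _)
          intro e _ he
          rw [Finsupp.notMem_support_iff.1 he, zero_smul]
        rw [this, ← dist_eq_norm]; exact hyu)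
    (by
      intro p q
      refine ⟨⟨⟨p.1.1 ∪ q.1.1, ?_, ?_⟩, max p.2 q.2⟩, ?_, ?_⟩
      · rw [Finset.coe_union]; exact Set.union_subset p.1.2.1 q.1.2.1
      · exact Finset.mem_union_left _ p.1.2.2
      · exact hmono _ _ Finset.subset_union_left (le_max_left _ _)
      · exact hmono _ _ Finset.subset_union_right (le_max_right _ _))
  refine ⟨p.1.1, p.2 + 1, p.1.2.1, p.1.2.2, Nat.succ_pos _, fun u hu => ?_⟩
  obtain ⟨c, hc, hcu⟩ := (hmem p u).1 (hp hu)
  refine ⟨c, fun e => (hc e).trans (by push_cast; linarith), hcu⟩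

/-- Every point in the closed unit disc is the midpoint of two unimodular numbers. -/
lemma exists_midpoint (c : ℂ) (hc : ‖c‖ ≤ 1) :
    ∃ t : Bool → Circle, c = ((t true : ℂ) + (t false : ℂ)) / 2 := by
  refine ⟨fun b => Circle.exp (Complex.arg c + (if b then 1 else -1) * Real.arccos ‖c‖), ?_⟩
  have h1 : Real.cos (Real.arccos ‖c‖) = ‖c‖ :=
    Real.cos_arccos (by linarith [norm_nonneg c]) hc
  have h2 : Complex.cos ((Real.arccos ‖c‖ : ℝ) : ℂ) = (‖c‖ : ℂ) := by
    rw [← Complex.ofReal_cos, h1]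
  simp only [Circle.coe_exp, if_true]
  have h3 := Complex.two_cos ((Real.arccos ‖c‖ : ℝ) : ℂ)
  have h4 := Complex.norm_mul_exp_arg_mul_I c
  rw [h2] at h3
  have e1 : (((Complex.arg c + 1 * Real.arccos ‖c‖ : ℝ) : ℂ) * Complex.I) =
    (Complex.arg c : ℂ) * Complex.I + (Real.arccos ‖c‖ : ℂ) * Complex.I := by push_cast; ring
  have e2 : (((Complex.arg c + (-1) * Real.arccos ‖c‖ : ℝ) : ℂ) * Complex.I) =
    (Complex.arg c : ℂ) * Complex.I + (-(Real.arccos ‖c‖ : ℂ)) * Complex.I := by push_cast; ring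
  simp only [Bool.false_eq_true, if_false]
  rw [e1, e2, Complex.exp_add, Complex.exp_add, ← mul_add, ← h3]
  nth_rewrite 1 [← h4]
  ring

end Operator

section Perturb

variable {X : Type*} [NormedAddCommGroup X] [NormedSpace ℂ X]

lemma block_approx {A : Type*} [Fintype A] (N : ℕ) (e : A → X) (f : A × Fin N → X) (r δ : ℝ)
    (hr : 0 ≤ r) (hf : ∀ c, ‖f c - e c.1‖ ≤ δ) (s : A × Fin N → Circle) :
    ‖∑ c, (s c : ℂ) • (r : ℂ) • f c - ∑ c, (s c : ℂ) • (r : ℂ) • e c.1‖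
      ≤ Fintype.card A * N * (r * δ) := by
  rw [← Finset.sum_sub_distrib]
  have : ∀ c ∈ (Finset.univ : Finset (A × Fin N)),
      ‖(s c : ℂ) • (r : ℂ) • f c - (s c : ℂ) • (r : ℂ) • e c.1‖ ≤ r * δ := by
    intro c _
    rw [← smul_sub, ← smul_sub, norm_smul, norm_smul, Circle.norm_coe, one_mul,
      Complex.norm_real, Real.norm_of_nonneg hr]
    exact mul_le_mul_of_nonneg_left (hf c) hr
  refine (norm_sum_le_of_le _ this).trans ?_
  simp

lemma block_sum {A : Type*} [Fintype A] (N : ℕ) (e : A → X) (r : ℝ)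
    (s : A × Fin N → Circle) :
    ∑ c, (s c : ℂ) • (r : ℂ) • e c.1 = ∑ a, (∑ i, (s (a, i) : ℂ)) • (r : ℂ) • e a := by
  rw [Fintype.sum_prod_type]
  refine Finset.sum_congr rfl fun a _ => ?_
  rw [Finset.sum_smul]

lemma block_integral {A : Type*} [Fintype A] (N : ℕ) (e : A → X) (f : A × Fin N → X) (r δ : ℝ)
    (hr : 0 ≤ r) (hf : ∀ c, ‖f c - e c.1‖ ≤ δ) (σ : A × Fin N → ℕ) (hσ : Function.Injective σ) :
    ∫⁻ z : ℕ → Circle, ‖∑ c, (z (σ c) : ℂ) • (r : ℂ) • f c‖ₑ ∂torusHaar ≤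
      ENNReal.ofReal (Fintype.card A * N * (r * δ) + ∑ a, Real.sqrt N * (r * ‖e a‖)) := by
  classical
  have hc : ∀ a : A, Continuous (fun z : ℕ → Circle => ∑ i, (z (σ (a, i)) : ℂ)) := by
    intro a
    refine continuous_finsetSum _ fun i _ => ?_
    exact circle_cont.comp (continuous_apply _)
  let F : (ℕ → Circle) → ℝ := fun z => Fintype.card A * N * (r * δ) +
    ∑ a, ‖∑ i, (z (σ (a, i)) : ℂ)‖ * (r * ‖e a‖)
  have hFc : Continuous F := by
    refine continuous_const.add (continuous_finsetSum _ fun a _ => ?_)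
    exact (hc a).norm.mul continuous_const
  have hpt : ∀ z : ℕ → Circle, ‖∑ c, (z (σ c) : ℂ) • (r : ℂ) • f c‖ ≤ F z := by
    intro z
    have h1 := block_approx N e f r δ hr hf (fun c => z (σ c))
    have h2 : ‖∑ c, (z (σ c) : ℂ) • (r : ℂ) • e c.1‖ ≤
        ∑ a, ‖∑ i, (z (σ (a, i)) : ℂ)‖ * (r * ‖e a‖) := by
      rw [block_sum N e r (fun c => z (σ c))]
      refine norm_sum_le_of_le _ fun a _ => ?_
      rw [norm_smul, norm_smul, Complex.norm_real, Real.norm_of_nonneg hr]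
    have h3 := norm_le_norm_sub_add (∑ c, (z (σ c) : ℂ) • (r : ℂ) • f c)
      (∑ c, (z (σ c) : ℂ) • (r : ℂ) • e c.1)
    simp only [F]
    linarith
  calc ∫⁻ z : ℕ → Circle, ‖∑ c, (z (σ c) : ℂ) • (r : ℂ) • f c‖ₑ ∂torusHaar
      ≤ ∫⁻ z : ℕ → Circle, ENNReal.ofReal (F z) ∂torusHaar := by
        refine lintegral_mono fun z => ?_
        rw [← ofReal_norm]
        exact ENNReal.ofReal_le_ofReal (hpt z)
    _ = ENNReal.ofReal (∫ z, F z ∂torusHaar) := by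
        rw [ofReal_integral_eq_lintegral_ofReal (integrable_torus hFc)]
        exact Filter.Eventually.of_forall fun z => (norm_nonneg _).trans (hpt z)
    _ ≤ _ := by
        apply ENNReal.ofReal_le_ofReal
        have hinte : ∀ a, Integrable (fun z : ℕ → Circle =>
            ‖∑ i, (z (σ (a, i)) : ℂ)‖ * (r * ‖e a‖)) torusHaar :=
          fun a => integrable_torus ((hc a).norm.mul continuous_const)
        have hadd : ∫ z, F z ∂torusHaar =
            ∫ _z : ℕ → Circle, (Fintype.card A * N * (r * δ) : ℝ) ∂torusHaar +
            ∫ z : ℕ → Circle, ∑ a, ‖∑ i, (z (σ (a, i)) : ℂ)‖ * (r * ‖e a‖) ∂torusHaar :=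
          integral_add (integrable_const _) (integrable_finsetSum _ fun a _ => hinte a)
        have hsum : ∫ z : ℕ → Circle, ∑ a, ‖∑ i, (z (σ (a, i)) : ℂ)‖ * (r * ‖e a‖) ∂torusHaar =
            ∑ a, ∫ z : ℕ → Circle, ‖∑ i, (z (σ (a, i)) : ℂ)‖ * (r * ‖e a‖) ∂torusHaar :=
          integral_finsetSum _ fun a _ => hinte a
        rw [hadd, hsum]
        simp only [integral_const, probReal_univ, smul_eq_mul, one_mul]
        gcongr with a _
        rw [integral_mul_const]
        gcongr
        have hinj : Function.Injective (fun i : Fin N => σ (a, i)) := by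
          intro i j hij
          simpa using hσ hij
        have := integral_norm_sum_le (Finset.univ.image (fun i : Fin N => σ (a, i)))
        rw [Finset.card_image_of_injective _ hinj] at this
        simpa [Finset.sum_image (fun i _ j _ h => hinj h)] using this

lemma perturb [SeparableSpace X] [Nontrivial X] (T : X →L[ℂ] X)
    (hspan : ∀ D : Set ℂ, D.Countable →
      Dense (↑(Submodule.span ℂ {x : X | ∃ l : ℂ, ‖l‖ = 1 ∧ l ∉ D ∧ T x = l • x}) : Set X))
    (k : ℕ) (x : ℕ → X) (l : ℕ → Circle)
    (hx : ∀ j < k, x j ≠ 0 ∧ T (x j) = (l j : ℂ) • x j)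
    (V : Set X) (hV : IsOpen V) (hVne : V.Nonempty) (δ : ℝ) (hδ : 0 < δ) :
    ∃ (k' : ℕ) (x' : ℕ → X) (l' : ℕ → Circle), k < k' ∧ (∀ j < k, x' j = x j ∧ l' j = l j) ∧
      (∀ j < k', x' j ≠ 0 ∧ T (x' j) = (l' j : ℂ) • x' j) ∧ Reach k k' l' ∧
      ∫⁻ z, ‖fsum k' x' z - fsum k x z‖ₑ ∂torusHaar ≤ ENNReal.ofReal δ ∧
      ∀ z, ∃ n : ℕ, (⇑T)^[n] (fsum k' x' z) ∈ V := by
  classical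
  have hgd := goodVec_dense T hspan
  obtain ⟨e₀, he₀⟩ := goodVec_nonempty T hgd
  obtain ⟨v, hv⟩ := hVne
  obtain ⟨ε, hε, hball⟩ := Metric.isOpen_iff.1 hV v hv
  have hK : IsCompact (range fun z : ℕ → Circle => v - fsum k x z) :=
    isCompact_range (continuous_const.sub (continuous_fsum k x))
  obtain ⟨E, M, hES, he₀E, hM, hcov⟩ := exists_cover _ hgd e₀ he₀ _ hK (ε / 2) (by positivity)
  have hMR : (0 : ℝ) < M := by exact_mod_cast hM
  let A := E × Bool
  let ev : A → X := fun a => a.1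
  -- choice of the closeness parameter
  obtain ⟨δ', hδ', hδ1, hδ2⟩ : ∃ δ' : ℝ, 0 < δ' ∧ E.card * M * δ' ≤ δ / 2 ∧
      E.card * M * δ' ≤ ε / 4 := by
    have hEc : (0 : ℝ) < E.card := by exact_mod_cast Finset.card_pos.2 ⟨_, he₀E⟩
    refine ⟨min (δ / 2) (ε / 4) / (E.card * M), by positivity, ?_, ?_⟩
    · rw [mul_div_cancel₀ _ (by positivity)]; exact min_le_left _ _
    · rw [mul_div_cancel₀ _ (by positivity)]; exact min_le_right _ _
  -- choice of the number of terms
  obtain ⟨N, hN, hNle⟩ : ∃ N : ℕ, 0 < N ∧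
      ∑ a : A, Real.sqrt N * ((M / (2 * N)) * ‖ev a‖) ≤ δ / 2 := by
    set C : ℝ := ∑ a : A, M * ‖ev a‖ / 2 with hC
    have hC0 : 0 ≤ C := Finset.sum_nonneg fun a _ => by positivity
    obtain ⟨m, hm⟩ := exists_nat_gt (C / (δ / 2))
    refine ⟨(m + 1) ^ 2, by positivity, ?_⟩
    have hs : Real.sqrt (((m + 1) ^ 2 : ℕ) : ℝ) = m + 1 := by
      push_cast
      exact Real.sqrt_sq (by positivity)
    have : ∑ a : A, Real.sqrt (((m + 1) ^ 2 : ℕ) : ℝ) *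
        ((M / (2 * (((m + 1) ^ 2 : ℕ) : ℝ))) * ‖ev a‖) = C / (m + 1) := by
      rw [hC, Finset.sum_div]
      refine Finset.sum_congr rfl fun a _ => ?_
      rw [hs]
      push_cast
      field_simp
    rw [this, div_le_iff₀ (by positivity)]
    rw [div_lt_iff₀ (by positivity)] at hm
    nlinarith
  have hNR : (0 : ℝ) < N := by exact_mod_cast hN
  set r : ℝ := M / (2 * N) with hr
  have hr0 : 0 < r := by positivity
  have hcardA : (Fintype.card A : ℝ) * N * (r * δ') = E.card * M * δ' := by
    have : (Fintype.card A : ℝ) = E.card * 2 := by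
      simp [A]
    rw [this, hr]
    field_simp
  let κ := A × Fin N
  let m := Fintype.card κ
  let q : κ ≃ Fin m := Fintype.equivFin κ
  have hm : 0 < m := Fintype.card_pos_iff.2 ⟨((⟨e₀, he₀E⟩, true), ⟨0, hN⟩)⟩
  let Λ : ℕ → Set Circle := fun j =>
    if h : j - k < m then eigNear T (ev (q.symm ⟨j - k, h⟩).1) δ' else eigNear T e₀ δ'
  have hΛ : ∀ j, ¬ (Λ j).Countable := by
    intro j
    simp only [Λ]
    split_ifs with h
    · exact hES (q.symm ⟨j - k, h⟩).1.1.2 δ' hδ'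
    · exact he₀ δ' hδ'
  obtain ⟨l', hl1, hl2, hreach⟩ := exists_reach k m l Λ hΛ
  have hkey : ∀ c : κ, l' (k + q c) ∈ eigNear T (ev c.1) δ' := by
    intro c
    have h1 := hl2 (k + q c) (by omega) (by have := (q c).2; omega)
    have h2 : k + (q c : ℕ) - k < m := by have := (q c).2; omega
    have h3 : (⟨k + (q c : ℕ) - k, h2⟩ : Fin m) = q c := by ext; simp
    simp only [Λ, dif_pos h2] at h1
    rw [h3] at h1
    simpa using h1
  choose f hf0 hfe hfT using hkey
  let x' : ℕ → X := fun j => if j < k then x j else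
    if h : j - k < m then (r : ℂ) • f (q.symm ⟨j - k, h⟩) else 0
  have hx'1 : ∀ j < k, x' j = x j := fun j hj => if_pos hj
  have hx'2 : ∀ c : κ, x' (k + q c) = (r : ℂ) • f c := by
    intro c
    have h2 : k + (q c : ℕ) - k < m := by have := (q c).2; omega
    have h3 : (⟨k + (q c : ℕ) - k, h2⟩ : Fin m) = q c := by ext; simp
    simp only [x']
    rw [if_neg (by omega), dif_pos h2, h3]
    simp
  have hsurj : ∀ j, k ≤ j → j < k + m → ∃ c : κ, j = k + q c := by
    intro j h1 h2
    refine ⟨q.symm ⟨j - k, by omega⟩, ?_⟩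
    simp; omega
  have hx' : ∀ j < k + m, x' j ≠ 0 ∧ T (x' j) = (l' j : ℂ) • x' j := by
    intro j hj
    rcases lt_or_ge j k with h | h
    · rw [hx'1 j h, hl1 j h]; exact hx j h
    · obtain ⟨c, rfl⟩ := hsurj j h hj
      rw [hx'2 c]
      refine ⟨smul_ne_zero (by exact_mod_cast hr0.ne') (hf0 c), ?_⟩
      rw [map_smul, hfT c, smul_comm]
  have hsum : ∀ z : ℕ → Circle, fsum (k + m) x' z =
      fsum k x z + ∑ c : κ, (z (k + q c) : ℂ) • (r : ℂ) • f c := by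
    intro z
    unfold fsum
    rw [Finset.sum_range_add]
    congr 1
    · exact Finset.sum_congr rfl fun j hj => by rw [hx'1 j (Finset.mem_range.1 hj)]
    · rw [Finset.sum_range, ← Equiv.sum_comp q]
      exact Finset.sum_congr rfl fun c _ => by rw [hx'2 c]
  refine ⟨k + m, x', l', by omega, fun j hj => ⟨hx'1 j hj, hl1 j hj⟩, hx', hreach, ?_, ?_⟩
  · simp only [hsum, add_sub_cancel_left]
    refine (block_integral N ev f r δ' hr0.le (fun c => (hfe c).le) (fun c => k + q c) ?_).trans ?_
    · intro c c' h
      apply q.injective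
      ext
      simpa using h
    · apply ENNReal.ofReal_le_ofReal
      rw [hcardA]; linarith
  · intro z
    obtain ⟨c, hcM, hcu⟩ := hcov (v - fsum k x z) ⟨z, rfl⟩
    have hmid : ∀ e : X, ∃ t : Bool → Circle,
        c e / M = ((t true : ℂ) + (t false : ℂ)) / 2 := by
      intro e
      apply exists_midpoint
      rw [norm_div, Complex.norm_natCast]
      exact (div_le_one hMR).2 (hcM e)
    choose t ht using hmid
    let s : ℕ → Circle := fun j => if j < k then z j else
      if h : j - k < m then t (ev (q.symm ⟨j - k, h⟩).1) (q.symm ⟨j - k, h⟩).1.2 else 1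
    have hs1 : ∀ j < k, s j = z j := fun j hj => if_pos hj
    have hs2 : ∀ c : κ, s (k + q c) = t (ev c.1) c.1.2 := by
      intro c
      have h2 : k + (q c : ℕ) - k < m := by have := (q c).2; omega
      have h3 : (⟨k + (q c : ℕ) - k, h2⟩ : Fin m) = q c := by ext; simp
      simp only [s]
      rw [if_neg (by omega), dif_pos h2, h3]
      simp
    have hsz : fsum k x s = fsum k x z := by
      unfold fsum
      exact Finset.sum_congr rfl fun j hj => by rw [hs1 j (Finset.mem_range.1 hj)]
    have hmain : ∑ c : κ, (s (k + q c) : ℂ) • (r : ℂ) • ev c.1 = ∑ e ∈ E, c e • e := by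
      rw [block_sum N ev r (fun c : κ => s (k + q c)), Fintype.sum_prod_type,
        ← Finset.sum_coe_sort E]
      refine Finset.sum_congr rfl fun e _ => ?_
      rw [Fintype.sum_bool]
      simp only [hs2, ev]
      rw [smul_smul, smul_smul, ← add_smul]
      congr 1
      have hMC : (M : ℂ) ≠ 0 := by exact_mod_cast hM.ne'
      have hNC : (N : ℂ) ≠ 0 := by exact_mod_cast hN.ne'
      have := ht (e : X)
      rw [div_eq_iff hMC] at this
      rw [this, hr]
      simp only [Finset.sum_const, Finset.card_univ, Fintype.card_fin, nsmul_eq_mul]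
      push_cast
      field_simp
    have hp : ‖fsum (k + m) x' s - v‖ < ε := by
      have h1 := block_approx N ev f r δ' hr0.le (fun c => (hfe c).le) (fun c => s (k + q c))
      rw [hmain, hcardA] at h1
      rw [hsum, hsz]
      have : fsum k x z + ∑ c : κ, (s (k + q c) : ℂ) • (r : ℂ) • f c - v =
          (∑ c : κ, (s (k + q c) : ℂ) • (r : ℂ) • f c - ∑ e ∈ E, c e • e) -
          (v - fsum k x z - ∑ e ∈ E, c e • e) := by abel
      rw [this]
      refine (norm_sub_le _ _).trans_lt ?_
      linarith
    set B : ℝ := ∑ j ∈ Finset.range (k + m), ‖x' j‖ with hB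
    have hB0 : 0 ≤ B := Finset.sum_nonneg fun _ _ => norm_nonneg _
    set η : ℝ := (ε - ‖fsum (k + m) x' s - v‖) / (B + 1) with hη
    have hη0 : 0 < η := div_pos (by linarith) (by linarith)
    obtain ⟨n, hn1, hn2⟩ := hreach 0 (fun j => s j * (z j)⁻¹) η hη0
    refine ⟨n, ?_⟩
    rw [iterate_fsum T (fun j hj => (hx' j hj).2)]
    apply hball
    rw [Metric.mem_ball, dist_eq_norm]
    have hclose : ‖fsum (k + m) x' (l' ^ n * z) - fsum (k + m) x' s‖ ≤ η * B := by
      apply norm_fsum_sub_le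
      intro j hj
      rw [Pi.mul_apply, Pi.pow_apply]
      rcases lt_or_ge j k with h | h
      · rw [hs1 j h]
        have := hn1 j h
        rw [pow_zero, ← circle_dist_mul_right (z j), one_mul] at this
        exact this.le
      · have := hn2 j h hj
        rw [← circle_dist_mul_right (z j)] at this
        simpa using this.le
    have hηB : η * B < ε - ‖fsum (k + m) x' s - v‖ := by
      have : η * (B + 1) = ε - ‖fsum (k + m) x' s - v‖ := by
        rw [hη]; field_simp
      linarith
    have := norm_sub_le_norm_sub_add_norm_sub (fsum (k + m) x' (l' ^ n * z)) (fsum (k + m) x' s) v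
    linarith

end Perturb

section Series

variable {X : Type*} [NormedAddCommGroup X] [NormedSpace ℂ X]

/-- A finite family of unimodular eigenvectors together with a tolerance. -/
structure EState (T : X →L[ℂ] X) where
  k : ℕ
  x : ℕ → X
  l : ℕ → Circle
  hx : ∀ j < k, x j ≠ 0 ∧ T (x j) = (l j : ℂ) • x j
  d : ℝ
  hd : 0 < d

/-- The relation between consecutive states. -/
def EStep (T : X →L[ℂ] X) (V : Set X) (n : ℕ) (s s' : EState T) : Prop :=
  s.k < s'.k ∧ (∀ j < s.k, s'.x j = s.x j ∧ s'.l j = s.l j) ∧ Reach s.k s'.k s'.l ∧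
    ∫⁻ z, ‖fsum s'.k s'.x z - fsum s.k s.x z‖ₑ ∂torusHaar ≤ ENNReal.ofReal s.d ∧
    s'.d ≤ s.d / 2 ∧ ∃ ρ > 0, s'.d ≤ ρ * (1 / 2) ^ n ∧
      ∀ z y, dist y (fsum s'.k s'.x z) < ρ → ∃ m : ℕ, (⇑T)^[m] y ∈ V

lemma isOpen_visit (T : X →L[ℂ] X) {V : Set X} (hV : IsOpen V) :
    IsOpen {y : X | ∃ m : ℕ, (⇑T)^[m] y ∈ V} := by
  have : {y : X | ∃ m : ℕ, (⇑T)^[m] y ∈ V} = ⋃ m : ℕ, (⇑T)^[m] ⁻¹' V := by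
    ext y; simp
  rw [this]
  exact isOpen_iUnion fun m => hV.preimage (T.continuous.iterate m)

lemma exists_step [SeparableSpace X] [Nontrivial X] (T : X →L[ℂ] X)
    (hspan : ∀ D : Set ℂ, D.Countable →
      Dense (↑(Submodule.span ℂ {x : X | ∃ l : ℂ, ‖l‖ = 1 ∧ l ∉ D ∧ T x = l • x}) : Set X))
    (V : Set X) (hV : IsOpen V) (hVne : V.Nonempty) (n : ℕ) (s : EState T) :
    ∃ s', EStep T V n s s' := by
  obtain ⟨k', x', l', hk, hag, hx', hreach, hinte, hvis⟩ :=
    perturb T hspan s.k s.x s.l s.hx V hV hVne s.d s.hd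
  have hK : IsCompact (range (fsum k' x')) := isCompact_range (continuous_fsum k' x')
  obtain ⟨ρ, hρ, hsub⟩ := hK.exists_thickening_subset_open (isOpen_visit T hV)
    (by rintro _ ⟨z, rfl⟩; exact hvis z)
  refine ⟨⟨k', x', l', hx', min (s.d / 2) (ρ * (1 / 2) ^ n), ?_⟩, hk, hag, hreach, hinte,
    min_le_left _ _, ρ, hρ, min_le_right _ _, ?_⟩
  · have := s.hd
    positivity
  · intro z y hy
    exact hsub (Metric.mem_thickening_iff.2 ⟨_, ⟨z, rfl⟩, hy⟩)

lemma exists_series [SeparableSpace X] [Nontrivial X] (T : X →L[ℂ] X)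
    (hspan : ∀ D : Set ℂ, D.Countable →
      Dense (↑(Submodule.span ℂ {x : X | ∃ l : ℂ, ‖l‖ = 1 ∧ l ∉ D ∧ T x = l • x}) : Set X))
    (V : ℕ → Set X) (hV : ∀ n, IsOpen (V n)) (hVne : ∀ n, (V n).Nonempty) (s : EState T) :
    ∃ (k : ℕ → ℕ) (x : ℕ → X) (l : ℕ → Circle) (d : ℕ → ℝ),
      StrictMono k ∧ k 0 = s.k ∧ (∀ j < s.k, x j = s.x j) ∧ d 0 = s.d ∧
      (∀ j, x j ≠ 0 ∧ T (x j) = (l j : ℂ) • x j) ∧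
      (∀ n, Reach (k n) (k (n + 1)) l) ∧ (∀ n, 0 < d n) ∧ (∀ n, d (n + 1) ≤ d n / 2) ∧
      (∀ n, ∫⁻ z, ‖fsum (k (n + 1)) x z - fsum (k n) x z‖ₑ ∂torusHaar ≤ ENNReal.ofReal (d n)) ∧
      ∀ n, ∃ ρ > 0, d (n + 1) ≤ ρ * (1 / 2) ^ n ∧
        ∀ z y, dist y (fsum (k (n + 1)) x z) < ρ → ∃ m : ℕ, (⇑T)^[m] y ∈ V n := by
  choose F hF using fun n (s : EState T) => exists_step T hspan (V n) (hV n) (hVne n) n s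
  let S : ℕ → EState T := fun n => Nat.rec s (fun n t => F n t) n
  have hS : ∀ n, EStep T (V n) n (S n) (S (n + 1)) := fun n => hF n (S n)
  have hmono : StrictMono fun n => (S n).k := strictMono_nat_of_lt_succ fun n => (hS n).1
  have hag : ∀ n m, n ≤ m → ∀ j < (S n).k, (S m).x j = (S n).x j ∧ (S m).l j = (S n).l j := by
    intro n m hnm
    induction m, hnm using Nat.le_induction with
    | base => exact fun j _ => ⟨rfl, rfl⟩
    | succ m hm ih =>
      intro j hj
      have h1 := ih j hj
      have h2 := (hS m).2.1 j (hj.trans_le (hmono.monotone hm))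
      exact ⟨h2.1.trans h1.1, h2.2.trans h1.2⟩
  have hkj : ∀ j, j < (S (j + 1)).k := fun j => hmono.id_le (j + 1)
  let x : ℕ → X := fun j => (S (j + 1)).x j
  let l : ℕ → Circle := fun j => (S (j + 1)).l j
  have hx : ∀ n, ∀ j < (S n).k, x j = (S n).x j ∧ l j = (S n).l j := by
    intro n j hj
    rcases le_total n (j + 1) with h | h
    · exact hag n (j + 1) h j hj
    · have := hag (j + 1) n h j (hkj j)
      exact ⟨this.1.symm, this.2.symm⟩
  have hf : ∀ n z, fsum (S n).k x z = fsum (S n).k (S n).x z :=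
    fun n z => fsum_congr (fun j hj => (hx n j hj).1) z
  refine ⟨fun n => (S n).k, x, l, fun n => (S n).d, hmono, rfl, fun j hj => (hx 0 j hj).1, rfl,
    fun j => (S (j + 1)).hx j (hkj j), ?_, fun n => (S n).hd, fun n => (hS n).2.2.2.2.1, ?_, ?_⟩
  · intro n
    exact (hS n).2.2.1.congr (fun j hj => (hx (n + 1) j hj).2) (hS n).1.le
  · intro n
    simp only [hf]
    exact (hS n).2.2.2.1
  · intro n
    simp only [hf]
    exact (hS n).2.2.2.2.2

lemma exists_limit [SeparableSpace X] [CompleteSpace X] [MeasurableSpace X] [BorelSpace X]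
    (f : ℕ → (ℕ → Circle) → X) (hf : ∀ n, Continuous (f n)) (d : ℕ → ℝ) (hd : ∀ n, 0 < d n)
    (hd2 : ∀ n, d (n + 1) ≤ d n / 2)
    (hinte : ∀ n, ∫⁻ z, ‖f (n + 1) z - f n z‖ₑ ∂torusHaar ≤ ENNReal.ofReal (d n)) :
    ∃ ξ : (ℕ → Circle) → X, Measurable ξ ∧
      (∀ᵐ z ∂torusHaar, Tendsto (fun n => f n z) atTop (𝓝 (ξ z))) ∧
      ∀ n, ∫⁻ z, edist (f n z) (ξ z) ∂torusHaar ≤ ENNReal.ofReal (2 * d n) := by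
  have hsec : SecondCountableTopology X := UniformSpace.secondCountable_of_separable X
  have hdn : ∀ n m, d (n + m) ≤ d n * (1 / 2) ^ m := by
    intro n m
    induction m with
    | zero => simp
    | succ m ih =>
      have := hd2 (n + m)
      rw [← add_assoc, pow_succ]
      linarith
  have hmeas : ∀ n, Measurable fun z => ‖f (n + 1) z - f n z‖ₑ := fun n =>
    ((hf (n + 1)).sub (hf n)).enorm.measurable
  have hsum : ∀ n, ∑' m, ∫⁻ z, ‖f (n + m + 1) z - f (n + m) z‖ₑ ∂torusHaar ≤
      ENNReal.ofReal (2 * d n) := by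
    intro n
    have hs : Summable fun m : ℕ => d n * (1 / 2 : ℝ) ^ m := summable_geometric_two.mul_left _
    calc _ ≤ ∑' m, ENNReal.ofReal (d n * (1 / 2) ^ m) :=
          ENNReal.tsum_le_tsum fun m => (hinte (n + m)).trans
            (ENNReal.ofReal_le_ofReal (hdn n m))
      _ = ENNReal.ofReal (∑' m, d n * (1 / 2) ^ m) := by
          rw [ENNReal.ofReal_tsum_of_nonneg _ hs]
          intro m
          have := hd n
          positivity
      _ = _ := by rw [tsum_mul_left, tsum_geometric_two, mul_comm]
  have hlt : ∀ n, ∫⁻ z, ∑' m, ‖f (n + m + 1) z - f (n + m) z‖ₑ ∂torusHaar ≤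
      ENNReal.ofReal (2 * d n) := by
    intro n
    rw [lintegral_tsum fun m => (hmeas (n + m)).aemeasurable]
    exact hsum n
  have hedist : ∀ z n, edist (f n z) (f n.succ z) ≤ ‖f (n + 1) z - f n z‖ₑ := by
    intro z n
    rw [edist_comm, edist_eq_enorm_sub]
  have hae : ∀ᵐ z ∂torusHaar, ∃ y, Tendsto (fun n => f n z) atTop (𝓝 y) := by
    have h0 := ae_lt_top (Measurable.ennreal_tsum fun m => hmeas (0 + m))
      ((hlt 0).trans_lt ENNReal.ofReal_lt_top).ne
    filter_upwards [h0] with z hz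
    have hc : CauchySeq (fun n => f n z) := by
      refine cauchySeq_of_edist_le_of_tsum_ne_top (fun n => ‖f (n + 1) z - f n z‖ₑ)
        (hedist z) ?_
      simpa only [zero_add] using hz.ne
    exact cauchySeq_tendsto_of_complete hc
  obtain ⟨ξ, hξ, hlim⟩ := measurable_limit_of_tendsto_metrizable_ae
    (fun n => (hf n).measurable.aemeasurable) hae
  refine ⟨ξ, hξ, hlim, fun n => (lintegral_mono_ae ?_).trans (hlt n)⟩
  filter_upwards [hlim] with z hz
  exact edist_le_tsum_of_edist_le_of_tendsto (fun n => ‖f (n + 1) z - f n z‖ₑ) (hedist z) hz n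

/-- The basis enumeration: every nonempty open set contains some `V n` occurring infinitely
often. -/
lemma exists_enum [SeparableSpace X] : ∃ V : ℕ → Set X, (∀ n, IsOpen (V n)) ∧
    (∀ n, (V n).Nonempty) ∧ ∀ U : Set X, IsOpen U → U.Nonempty →
      ∃ W ⊆ U, ∀ N, ∃ n ≥ N, V n = W := by
  have hsec : SecondCountableTopology X := UniformSpace.secondCountable_of_separable X
  have hne : (countableBasis X).Nonempty := by
    obtain ⟨W, hW, _⟩ := (isBasis_countableBasis X).exists_subset_of_mem_open (mem_univ (0 : X))
      isOpen_univ
    exact ⟨W, hW⟩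
  obtain ⟨B, hB⟩ := (countable_countableBasis X).exists_eq_range hne
  have hmem : ∀ n, B n ∈ countableBasis X := fun n => hB ▸ mem_range_self n
  refine ⟨fun n => B n.unpair.1, fun n => isOpen_of_mem_countableBasis (hmem _),
    fun n => nonempty_of_mem_countableBasis (hmem _), ?_⟩
  intro U hU ⟨u, hu⟩
  obtain ⟨W, hW, _, hWU⟩ := (isBasis_countableBasis X).exists_subset_of_mem_open hu hU
  rw [hB] at hW
  obtain ⟨i, rfl⟩ := hW
  exact ⟨B i, hWU, fun N => ⟨Nat.pair i N, Nat.right_le_pair _ _, by simp⟩⟩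

lemma ae_hypercyclic [SeparableSpace X] [MeasurableSpace X] [BorelSpace X] (T : X →L[ℂ] X)
    (f : ℕ → (ℕ → Circle) → X) (hf : ∀ n, Continuous (f n)) (d : ℕ → ℝ)
    (ξ : (ℕ → Circle) → X) (hξ : Measurable ξ)
    (hinte : ∀ n, ∫⁻ z, edist (f n z) (ξ z) ∂torusHaar ≤ ENNReal.ofReal (2 * d n))
    (V : ℕ → Set X)
    (hV : ∀ U : Set X, IsOpen U → U.Nonempty → ∃ W ⊆ U, ∀ N, ∃ n ≥ N, V n = W)
    (hvis : ∀ n, ∃ ρ > 0, d (n + 1) ≤ ρ * (1 / 2) ^ n ∧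
        ∀ z y, dist y (f (n + 1) z) < ρ → ∃ m : ℕ, (⇑T)^[m] y ∈ V n) :
    ∀ᵐ z ∂torusHaar, Dense (Set.range fun n : ℕ => (⇑T)^[n] (ξ z)) := by
  have hsec : SecondCountableTopology X := UniformSpace.secondCountable_of_separable X
  have hbound : ∀ n, torusHaar {z | ¬ ∃ m : ℕ, (⇑T)^[m] (ξ z) ∈ V n} ≤
      ENNReal.ofReal (2 * (1 / 2) ^ n) := by
    intro n
    obtain ⟨ρ, hρ, hdρ, hv⟩ := hvis n
    have hsub : {z | ¬ ∃ m : ℕ, (⇑T)^[m] (ξ z) ∈ V n} ⊆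
        {z | ENNReal.ofReal ρ ≤ edist (f (n + 1) z) (ξ z)} := by
      intro z hz
      by_contra hcon
      apply hz
      apply hv z
      have hcon' : edist (f (n + 1) z) (ξ z) < ENNReal.ofReal ρ := not_le.1 hcon
      rw [edist_dist, ENNReal.ofReal_lt_ofReal_iff hρ] at hcon'
      rwa [dist_comm]
    refine (measure_mono hsub).trans ?_
    refine (meas_ge_le_lintegral_div ((hf _).measurable.edist hξ).aemeasurable
      (ENNReal.ofReal_pos.2 hρ).ne' ENNReal.ofReal_ne_top).trans ?_
    refine (ENNReal.div_le_div_right (hinte (n + 1)) _).trans ?_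
    rw [← ENNReal.ofReal_div_of_pos hρ]
    apply ENNReal.ofReal_le_ofReal
    rw [div_le_iff₀ hρ]
    linarith
  have hlim : Tendsto (fun n : ℕ => ENNReal.ofReal (2 * (1 / 2) ^ n)) atTop (𝓝 0) := by
    have h : Tendsto (fun n : ℕ => (2 : ℝ) * (1 / 2) ^ n) atTop (𝓝 (2 * 0)) :=
      (tendsto_pow_atTop_nhds_zero_of_lt_one (by norm_num) (by norm_num)).const_mul 2
    simpa using ENNReal.tendsto_ofReal h
  have hall : ∀ᵐ z ∂torusHaar, ∀ b ∈ countableBasis X, ∃ m : ℕ, (⇑T)^[m] (ξ z) ∈ b := by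
    rw [ae_ball_iff (countable_countableBasis X)]
    intro b hb
    obtain ⟨W, hWb, hW⟩ := hV b (isOpen_of_mem_countableBasis hb)
      (nonempty_of_mem_countableBasis hb)
    have h0 : torusHaar {z | ¬ ∃ m : ℕ, (⇑T)^[m] (ξ z) ∈ W} = 0 := by
      by_contra hne
      obtain ⟨N, hN⟩ := eventually_atTop.1
        (hlim.eventually (gt_mem_nhds (pos_iff_ne_zero.2 hne)))
      obtain ⟨n, hn, rfl⟩ := hW N
      exact absurd (hbound n) (not_le.2 (hN n hn))
    refine measure_mono_null ?_ h0
    intro z hz ⟨m, hm⟩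
    exact hz ⟨m, hWb hm⟩
  filter_upwards [hall] with z hz
  rw [(isBasis_countableBasis X).dense_iff]
  intro b hb _
  obtain ⟨m, hm⟩ := hz b hb
  exact ⟨_, hm, m, rfl⟩

/-- The law of a random vector on the torus. -/
noncomputable def law [MeasurableSpace X] (f : (ℕ → Circle) → X) (hf : Measurable f) :
    ProbabilityMeasure X :=
  ⟨torusHaar.map f, Measure.isProbabilityMeasure_map hf.aemeasurable⟩

lemma law_tendsto [MeasurableSpace X] [BorelSpace X] [SeparableSpace X]
    (f : ℕ → (ℕ → Circle) → X) (hf : ∀ n, Measurable (f n))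
    (g : (ℕ → Circle) → X) (hg : Measurable g) (u : ℕ → ENNReal) (hu : Tendsto u atTop (𝓝 0))
    (hfg : ∀ n, ∫⁻ z, edist (f n z) (g z) ∂torusHaar ≤ u n) :
    Tendsto (fun n => law (f n) (hf n)) atTop (𝓝 (law g hg)) := by
  have hsec : SecondCountableTopology X := UniformSpace.secondCountable_of_separable X
  have hm : TendstoInMeasure torusHaar f atTop g := by
    intro ε hε
    have h1 : ∀ n, torusHaar {z | ε ≤ edist (f n z) (g z)} ≤ u n / ε := by
      intro n
      rcases eq_or_ne ε ⊤ with rfl | hεt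
      · have : {z | ⊤ ≤ edist (f n z) (g z)} = ∅ := by
          ext z; simp [edist_ne_top]
        rw [this]; simp
      · exact (meas_ge_le_lintegral_div ((hf n).edist hg).aemeasurable hε.ne' hεt).trans
          (ENNReal.div_le_div_right (hfg n) _)
    refine tendsto_of_tendsto_of_tendsto_of_le_of_le tendsto_const_nhds ?_ (fun _ => zero_le) h1
    have := ENNReal.Tendsto.div_const hu (b := ε) (Or.inr hε.ne')
    simpa using this
  exact (hm.tendstoInDistribution fun n => (hf n).aemeasurable).tendsto

lemma law_mem [MeasurableSpace X] [BorelSpace X] [SeparableSpace X] (T : X →L[ℂ] X)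
    (k : ℕ) (x : ℕ → X) (l : ℕ → Circle) (hx : ∀ j < k, x j ≠ 0 ∧ T (x j) = (l j : ℂ) • x j)
    (hm : Measurable (fsum k x)) : law (fsum k x) hm ∈ SteinhausFamily (⇑T) := by
  refine ⟨k, fun j => x j, fun j => l j, fun j => ⟨(hx j j.2).1, Circle.norm_coe _,
    (hx j j.2).2⟩, ?_⟩
  have hc : Continuous fun z : Fin k → Circle => ∑ j, (z j : ℂ) • x j := by
    refine continuous_finsetSum _ fun i _ => ?_
    exact (circle_cont.comp (continuous_apply i)).smul continuous_const
  change torusHaar.map (fsum k x) = _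
  rw [← (torusHaar_coord k).map_eq, Measure.map_map hc.measurable (torusHaar_coord k).measurable]
  congr 1
  ext z
  simp only [fsum, Function.comp_apply]
  exact Finset.sum_range fun j => (z j : ℂ) • x j

lemma mem_law [MeasurableSpace X] [BorelSpace X] (T : X →L[ℂ] X)
    (μ : ProbabilityMeasure X) (hμ : μ ∈ SteinhausFamily (⇑T)) :
    ∃ (k : ℕ) (x : ℕ → X) (l : ℕ → Circle) (_ : ∀ j < k, x j ≠ 0 ∧ T (x j) = (l j : ℂ) • x j),
      μ = law (fsum k x) (continuous_fsum k x).measurable := by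
  obtain ⟨k, x, l, hx, hm⟩ := hμ
  choose c hc using fun j => exists_circle_coe (l j) (hx j).2.1
  refine ⟨k, fun j => if h : j < k then x ⟨j, h⟩ else 0,
    fun j => if h : j < k then c ⟨j, h⟩ else 1, ?_, ?_⟩
  · intro j hj
    simp only [hj, dif_pos, hc]
    exact ⟨(hx ⟨j, hj⟩).1, (hx ⟨j, hj⟩).2.2⟩
  · apply Subtype.ext
    change (μ : Measure X) = torusHaar.map _
    have hcc : Continuous fun z : Fin k → Circle => ∑ j, (z j : ℂ) • x j := by
      refine continuous_finsetSum _ fun i _ => ?_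
      exact (circle_cont.comp (continuous_apply i)).smul continuous_const
    rw [hm, ← (torusHaar_coord k).map_eq,
      Measure.map_map hcc.measurable (torusHaar_coord k).measurable]
    congr 1
    ext z
    simp only [fsum, Function.comp_apply]
    rw [Finset.sum_range]
    exact Finset.sum_congr rfl fun j _ => by simp

end Series

section Final

variable {X : Type*} [NormedAddCommGroup X] [NormedSpace ℂ X]

lemma denseRange_pow_of_reach (k : ℕ → ℕ) (hk : StrictMono k) (hk0 : k 0 = 0) (l : ℕ → Circle)
    (hr : ∀ n, Reach (k n) (k (n + 1)) l) : DenseRange (fun n : ℕ => l ^ n) := by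
  have key : ∀ n (z : ℕ → Circle) (ε : ℝ), 0 < ε → ∃ m : ℕ, ∀ j < k n, dist (l j ^ m) (z j) < ε := by
    intro n
    induction n with
    | zero => intro z ε _; exact ⟨0, fun j hj => by omega⟩
    | succ n ih =>
      intro z ε hε
      obtain ⟨n₀, h0⟩ := ih z (ε / 2) (by positivity)
      obtain ⟨m, h1, h2⟩ := hr n n₀ z (ε / 2) (by positivity)
      refine ⟨m, fun j hj => ?_⟩
      rcases lt_or_ge j (k n) with h | h
      · have := dist_triangle (l j ^ m) (l j ^ n₀) (z j)
        linarith [h1 j h, h0 j h]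
      · linarith [h2 j h hj]
  intro z
  choose m hm using fun n : ℕ => key n z (1 / (n + 1)) (by positivity)
  have hlim : Tendsto (fun n => l ^ (m n)) atTop (𝓝 z) := by
    rw [tendsto_pi_nhds]
    intro j
    rw [tendsto_iff_dist_tendsto_zero]
    refine squeeze_zero' (Eventually.of_forall fun n => dist_nonneg) ?_
      tendsto_one_div_add_atTop_nhds_zero_nat
    filter_upwards [eventually_gt_atTop j] with n hn
    exact (hm n j (hn.trans_le (hk.id_le n))).le
  exact mem_closure_of_tendsto hlim (Eventually.of_forall fun n => mem_range_self _)

lemma measurableSet_hc [MeasurableSpace X] [BorelSpace X] [SeparableSpace X] (T : X →L[ℂ] X) :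
    ∃ O : ℕ → Set X, (∀ n, IsOpen (O n)) ∧
      {x : X | Dense (Set.range fun n : ℕ => (⇑T)^[n] x)} = ⋂ n, O n := by
  obtain ⟨V, hV, hVne, hVU⟩ := exists_enum (X := X)
  refine ⟨fun n => {y : X | ∃ m : ℕ, (⇑T)^[m] y ∈ V n}, fun n => isOpen_visit T (hV n), ?_⟩
  ext y
  simp only [mem_ofPred_eq, mem_iInter]
  constructor
  · intro h n
    obtain ⟨_, hv, m, rfl⟩ := h.inter_open_nonempty (V n) (hV n) (hVne n)
    exact ⟨m, hv⟩
  · intro h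
    rw [dense_iff_inter_open]
    intro U hU hUne
    obtain ⟨W, hWU, hW⟩ := hVU U hU hUne
    obtain ⟨n, _, rfl⟩ := hW 0
    obtain ⟨m, hm⟩ := h n
    exact ⟨_, hWU hm, m, rfl⟩

lemma isOpen_lt_measure [MeasurableSpace X] [BorelSpace X] (O : Set X) (hO : IsOpen O)
    (c : ENNReal) : IsOpen {m : ProbabilityMeasure X | c < (m : Measure X) O} := by
  rw [isOpen_iff_mem_nhds]
  intro m hm
  have h := ProbabilityMeasure.le_liminf_measure_open_of_tendsto
    (tendsto_id (x := 𝓝 m)) hO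
  exact eventually_lt_of_lt_liminf (lt_of_lt_of_le hm h)

lemma isGdelta_hc [MeasurableSpace X] [BorelSpace X] [SeparableSpace X] (T : X →L[ℂ] X) :
    IsGδ {m : ProbabilityMeasure X |
      (m : Measure X) {x : X | Dense (Set.range fun n : ℕ => (⇑T)^[n] x)} = 1} := by
  obtain ⟨O, hO, hHC⟩ := measurableSet_hc T
  have heq : {m : ProbabilityMeasure X |
      (m : Measure X) {x : X | Dense (Set.range fun n : ℕ => (⇑T)^[n] x)} = 1} =
      ⋂ n, ⋂ i : ℕ, {m : ProbabilityMeasure X | 1 - ((i : ENNReal) + 1)⁻¹ < (m : Measure X) (O n)} := by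
    ext m
    simp only [mem_ofPred_eq, mem_iInter, hHC]
    constructor
    · intro h n i
      have h1 : (1 : ENNReal) ≤ (m : Measure X) (O n) := by
        rw [← h]; exact measure_mono (iInter_subset _ n)
      refine lt_of_lt_of_le ?_ h1
      refine ENNReal.sub_lt_self ENNReal.one_ne_top one_ne_zero ?_
      simp
    · intro h
      have h1 : ∀ n, (m : Measure X) (O n) = 1 := by
        intro n
        refine le_antisymm prob_le_one ?_
        refine le_of_tendsto' (f := fun i : ℕ => (1 : ENNReal) - ((i : ENNReal) + 1)⁻¹)
          (x := atTop) ?_ fun i => (h n i).le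
        have h2 : Tendsto (fun i : ℕ => ((i : ENNReal) + 1)⁻¹) atTop (𝓝 0) := by
          have := (tendsto_add_atTop_iff_nat 1).2 ENNReal.tendsto_inv_nat_nhds_zero
          simpa using this
        have h3 := ENNReal.Tendsto.sub (tendsto_const_nhds (x := (1 : ENNReal))) h2
          (Or.inl ENNReal.one_ne_top)
        simpa using h3
      have h2 : ∀ᵐ x ∂(m : Measure X), ∀ n, x ∈ O n := by
        rw [ae_all_iff]
        intro n
        exact (mem_ae_iff_prob_eq_one (hO n).measurableSet).2 (h1 n)
      rw [← mem_ae_iff_prob_eq_one (MeasurableSet.iInter fun n => (hO n).measurableSet)]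
      filter_upwards [h2] with x hx
      exact mem_iInter.2 hx
  rw [heq]
  exact IsGδ.iInter fun n => IsGδ.iInter fun i => (isOpen_lt_measure _ (hO n) _).isGδ

lemma law_hc [MeasurableSpace X] [BorelSpace X] [SeparableSpace X] (T : X →L[ℂ] X)
    (ξ : (ℕ → Circle) → X) (hξ : Measurable ξ)
    (h : ∀ᵐ z ∂torusHaar, Dense (Set.range fun n : ℕ => (⇑T)^[n] (ξ z))) :
    (torusHaar.map ξ) {x : X | Dense (Set.range fun n : ℕ => (⇑T)^[n] x)} = 1 := by
  obtain ⟨O, hO, hHC⟩ := measurableSet_hc T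
  have hm : MeasurableSet {x : X | Dense (Set.range fun n : ℕ => (⇑T)^[n] x)} := by
    rw [hHC]; exact MeasurableSet.iInter fun n => (hO n).measurableSet
  rw [Measure.map_apply hξ hm]
  exact (mem_ae_iff_prob_eq_one (hξ hm)).1 h

/-- The main construction, starting from an arbitrary state. -/
lemma main_construction [SeparableSpace X] [CompleteSpace X] [Nontrivial X] [MeasurableSpace X]
    [BorelSpace X] (T : X →L[ℂ] X)
    (hspan : ∀ D : Set ℂ, D.Countable →
      Dense (↑(Submodule.span ℂ {x : X | ∃ l : ℂ, ‖l‖ = 1 ∧ l ∉ D ∧ T x = l • x}) : Set X))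
    (s : EState T) :
    ∃ (k : ℕ → ℕ) (x : ℕ → X) (l : ℕ → Circle) (ξ : (ℕ → Circle) → X) (hξ : Measurable ξ),
      StrictMono k ∧ k 0 = s.k ∧ (∀ j, x j ≠ 0 ∧ T (x j) = (l j : ℂ) • x j) ∧
      (∀ n, Reach (k n) (k (n + 1)) l) ∧
      (∀ᵐ z ∂torusHaar, Tendsto (fun n => fsum (k n) x z) atTop (𝓝 (ξ z))) ∧
      law ξ hξ ∈ closure (SteinhausFamily (⇑T)) ∧
      (torusHaar.map ξ) {x : X | Dense (Set.range fun n : ℕ => (⇑T)^[n] x)} = 1 ∧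
      ∫⁻ z, edist (ξ z) (fsum s.k s.x z) ∂torusHaar ≤ ENNReal.ofReal (2 * s.d) := by
  obtain ⟨V, hV, hVne, hVU⟩ := exists_enum (X := X)
  obtain ⟨k, x, l, d, hk, hk0, hx0, hd0, hx, hreach, hdpos, hd2, hinte, hvis⟩ :=
    exists_series T hspan V hV hVne s
  obtain ⟨ξ, hξ, hlim, hL1⟩ := exists_limit (fun n => fsum (k n) x)
    (fun n => continuous_fsum (k n) x) d hdpos hd2 hinte
  refine ⟨k, x, l, ξ, hξ, hk, hk0, hx, hreach, hlim, ?_, ?_, ?_⟩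
  · have hdn : ∀ n, d n ≤ d 0 * (1 / 2) ^ n := by
      intro n
      induction n with
      | zero => simp
      | succ m ih =>
        have := hd2 m
        rw [pow_succ]
        linarith
    have hd : Tendsto (fun n => ENNReal.ofReal (2 * d n)) atTop (𝓝 0) := by
      have h : Tendsto (fun n : ℕ => d 0 * (1 / 2) ^ n) atTop (𝓝 (d 0 * 0)) :=
        (tendsto_pow_atTop_nhds_zero_of_lt_one (by norm_num) (by norm_num)).const_mul _
      rw [mul_zero] at h
      have h2 : Tendsto d atTop (𝓝 0) := squeeze_zero (fun n => (hdpos n).le) hdn h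
      have h3 := ENNReal.tendsto_ofReal (h2.const_mul 2)
      simpa using h3
    refine mem_closure_of_tendsto (law_tendsto _
      (fun n => (continuous_fsum (k n) x).measurable) ξ hξ _ hd hL1)
      (Eventually.of_forall fun n => ?_)
    exact law_mem T (k n) x l (fun j _ => hx j) _
  · exact law_hc T ξ hξ (ae_hypercyclic T (fun n => fsum (k n) x)
      (fun n => continuous_fsum (k n) x) d ξ hξ hL1 V hVU hvis)
  · have h := hL1 0
    rw [hd0, hk0] at h
    have he : ∀ z, edist (ξ z) (fsum s.k s.x z) = edist (fsum s.k x z) (ξ z) := by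
      intro z
      rw [fsum_congr hx0 z, edist_comm]
    simp only [he]
    exact h

lemma ergodic_of_limit [MeasurableSpace X] [BorelSpace X] (T : X →L[ℂ] X)
    (k : ℕ → ℕ) (x : ℕ → X) (l : ℕ → Circle) (ξ : (ℕ → Circle) → X) (hξ : Measurable ξ)
    (hk : StrictMono k) (hk0 : k 0 = 0) (hx : ∀ j, x j ≠ 0 ∧ T (x j) = (l j : ℂ) • x j)
    (hreach : ∀ n, Reach (k n) (k (n + 1)) l)
    (hlim : ∀ᵐ z ∂torusHaar, Tendsto (fun n => fsum (k n) x z) atTop (𝓝 (ξ z))) :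
    Ergodic (⇑T) (torusHaar.map ξ) := by
  have herg : Ergodic (l * ·) torusHaar :=
    ergodic_mul_left_of_denseRange_pow (denseRange_pow_of_reach k hk hk0 l hreach) torusHaar
  have hTm : Measurable (⇑T) := T.continuous.measurable
  have hsemi : ∀ᵐ z ∂torusHaar, T (ξ z) = ξ (l * z) := by
    have h2 := herg.toMeasurePreserving.quasiMeasurePreserving.ae hlim
    filter_upwards [hlim, h2] with z hz hz2
    have h3 : Tendsto (fun n => fsum (k n) x (l * z)) atTop (𝓝 (T (ξ z))) := by
      have := (T.continuous.tendsto (ξ z)).comp hz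
      refine this.congr fun n => ?_
      exact map_fsum T (fun j _ => (hx j).2) z
    exact tendsto_nhds_unique h3 hz2
  refine ⟨⟨hTm, ?_⟩, ⟨?_⟩⟩
  · rw [Measure.map_map hTm hξ]
    have h1 : torusHaar.map (⇑T ∘ ξ) = torusHaar.map (ξ ∘ (l * ·)) := Measure.map_congr hsemi
    rw [h1, ← Measure.map_map hξ herg.measurable, herg.toMeasurePreserving.map_eq]
  · intro s hs hTs
    have hpre : (l * ·) ⁻¹' (ξ ⁻¹' s) =ᵐ[torusHaar] ξ ⁻¹' s := by
      filter_upwards [hsemi] with z hz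
      have h1 : (ξ (l * z) ∈ s) = (ξ z ∈ s) := by
        rw [← hz]
        conv_rhs => rw [← hTs]
        rfl
      exact h1
    have := herg.quasiErgodic.ae_mem_or_ae_notMem₀ (hξ hs).nullMeasurableSet hpre
    rw [eventuallyConst_set]
    rcases this with h | h
    · left
      exact (ae_map_iff hξ.aemeasurable hs).2 h
    · right
      exact (ae_map_iff hξ.aemeasurable hs.compl).2 h

lemma full_support [MeasurableSpace X] [BorelSpace X] (T : X →L[ℂ] X) (μ : Measure X)
    (hT : MeasurePreserving (⇑T) μ μ)
    (hHC : μ {x : X | Dense (Set.range fun n : ℕ => (⇑T)^[n] x)} = 1)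
    (U : Set X) (hU : IsOpen U) (hUne : U.Nonempty) : 0 < μ U := by
  rw [pos_iff_ne_zero]
  intro h0
  have hsub : {x : X | Dense (Set.range fun n : ℕ => (⇑T)^[n] x)} ⊆
      ⋃ n : ℕ, (⇑T)^[n] ⁻¹' U := by
    intro y hy
    obtain ⟨_, hv, m, rfl⟩ := Dense.inter_open_nonempty hy U hU hUne
    exact mem_iUnion.2 ⟨m, hv⟩
  have h1 : μ (⋃ n : ℕ, (⇑T)^[n] ⁻¹' U) = 0 := by
    rw [measure_iUnion_null_iff]
    intro n
    rw [(hT.iterate n).measure_preimage hU.measurableSet.nullMeasurableSet, h0]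
  have := measure_mono_null hsub h1
  rw [hHC] at this
  exact one_ne_zero this

lemma dense_part [SeparableSpace X] [CompleteSpace X] [Nontrivial X] [MeasurableSpace X]
    [BorelSpace X] (T : X →L[ℂ] X)
    (hspan : ∀ D : Set ℂ, D.Countable →
      Dense (↑(Submodule.span ℂ {x : X | ∃ l : ℂ, ‖l‖ = 1 ∧ l ∉ D ∧ T x = l • x}) : Set X)) :
    Dense {m : ↥(closure (SteinhausFamily (⇑T))) |
        (↑m.1 : Measure X) {x : X | Dense (Set.range fun n : ℕ => (⇑T)^[n] x)} = 1} := by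
  rw [Subtype.dense_iff]
  apply closure_minimal _ isClosed_closure
  intro μ hμ
  obtain ⟨k, x, l, hx, rfl⟩ := mem_law T μ hμ
  choose K Y L ξ hξ _ _ _ _ _ hcl hHC hinte using fun i : ℕ =>
    main_construction T hspan ⟨k, x, l, hx, (1 / 2) ^ i, by positivity⟩
  have hu : Tendsto (fun n : ℕ => ENNReal.ofReal (2 * (1 / 2) ^ n)) atTop (𝓝 0) := by
    have h : Tendsto (fun n : ℕ => (2 : ℝ) * (1 / 2) ^ n) atTop (𝓝 (2 * 0)) :=
      (tendsto_pow_atTop_nhds_zero_of_lt_one (by norm_num) (by norm_num)).const_mul 2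
    simpa using ENNReal.tendsto_ofReal h
  have ht := law_tendsto ξ hξ (fsum k x) (continuous_fsum k x).measurable _ hu hinte
  exact mem_closure_of_tendsto ht
    (Eventually.of_forall fun i => ⟨⟨law (ξ i) (hξ i), hcl i⟩, hHC i, rfl⟩)

end Final

/-- Let `T` be a bounded linear operator on a complex separable
Banach space `X` with a perfectly spanning set of unimodular eigenvectors. Then
`S̄_T(HC(T))` is a dense `G_δ` subset of `S̄_T(X)`; in particular, `T` admits an
ergodic invariant Borel probability measure with full support. -/
theorem stmt19 {X : Type*} [NormedAddCommGroup X] [NormedSpace ℂ X] [CompleteSpace X]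
    [TopologicalSpace.SeparableSpace X] [MeasurableSpace X] [BorelSpace X]
    (T : X →L[ℂ] X)
    (hspan : ∀ D : Set ℂ, D.Countable →
      Dense (↑(Submodule.span ℂ {x : X | ∃ l : ℂ, ‖l‖ = 1 ∧ l ∉ D ∧ T x = l • x}) :
        Set X)) :
    (IsGδ {m : ↥(closure (SteinhausFamily (⇑T))) |
        (↑m.1 : Measure X) {x : X | Dense (Set.range fun n : ℕ => (⇑T)^[n] x)} = 1} ∧
      Dense {m : ↥(closure (SteinhausFamily (⇑T))) |
        (↑m.1 : Measure X) {x : X | Dense (Set.range fun n : ℕ => (⇑T)^[n] x)} = 1}) ∧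
    ∃ μ : Measure X, IsProbabilityMeasure μ ∧ Ergodic (⇑T) μ ∧
      ∀ U : Set X, IsOpen U → U.Nonempty → 0 < μ U := by
  rcases subsingleton_or_nontrivial X with hsub | hnt
  · have hd : ∀ x : X, Dense (Set.range fun n : ℕ => (⇑T)^[n] x) := by
      intro x y
      exact subset_closure ⟨0, Subsingleton.elim _ _⟩
    have huniv : {x : X | Dense (Set.range fun n : ℕ => (⇑T)^[n] x)} = univ :=
      eq_univ_of_forall hd
    have hall : {m : ↥(closure (SteinhausFamily (⇑T))) |
        (↑m.1 : Measure X) {x : X | Dense (Set.range fun n : ℕ => (⇑T)^[n] x)} = 1} = univ := by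
      rw [huniv]
      exact eq_univ_of_forall fun m => measure_univ
    rw [hall]
    refine ⟨⟨IsGδ.univ, dense_univ⟩, Measure.dirac 0, inferInstance, ?_, ?_⟩
    · have hT : (⇑T) = id := funext fun x => Subsingleton.elim _ _
      rw [hT]
      refine ⟨MeasurePreserving.id _, ⟨fun s hs _ => ?_⟩⟩
      rw [eventuallyConst_set]
      by_cases h0 : (0 : X) ∈ s
      · left
        exact Eventually.of_forall fun x => by rwa [Subsingleton.elim x 0]
      · right
        exact Eventually.of_forall fun x => by rwa [Subsingleton.elim x 0]
    · intro U _ ⟨u, hu⟩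
      have hU : U = univ := eq_univ_of_forall fun x => by rwa [Subsingleton.elim x u]
      rw [hU, measure_univ]
      exact one_pos
  · refine ⟨⟨(isGdelta_hc T).preimage continuous_subtype_val, dense_part T hspan⟩, ?_⟩
    obtain ⟨k, x, l, ξ, hξ, hk, hk0, hx, hreach, hlim, _, hHC, _⟩ :=
      main_construction T hspan ⟨0, fun _ => 0, fun _ => 1, fun j hj => absurd hj (by omega),
        1, one_pos⟩
    have herg := ergodic_of_limit T k x l ξ hξ hk hk0 hx hreach hlim
    exact ⟨torusHaar.map ξ, Measure.isProbabilityMeasure_map hξ.aemeasurable, herg,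
      full_support T _ herg.toMeasurePreserving hHC⟩
end
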